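/- arXiv:1412.2213 — 3 statements merged into one kernel-verified Lean document; each statement's English description precedes it below -/
import Mathlib

section
/- Let X and Y be smooth complex algebraic varieties and let p : P → X and q : Q → Y be Zariski locally trivial 𝐓ⁿ-bundles. If either X or Y is not 𝔸¹*-uniruled, then for every isomorphism of abstract algebraic varieties Φ : P → Q there exists an isomorphism φ : X → Y such that q ∘ Φ = φ ∘ p. In particular, strong cancellation holds for products of algebraic tori 𝐓ⁿ with non-𝔸¹*-uniruled smooth varieties. -/
open AlgebraicGeometry CategoryTheory CategoryTheory.Limits TopologicalSpace

noncomputable section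

/-- `Spec ℂ`, the base point of the category of complex algebraic varieties. -/
abbrev SpecC : Scheme := Spec (CommRingCat.of ℂ)

/-- The Laurent polynomial ring `ℂ[t₁^{±1},…,tₙ^{±1}]`, realised as the group algebra
of the lattice `ℤⁿ` over `ℂ`. -/
abbrev LaurentRing (n : ℕ) : Type := AddMonoidAlgebra ℂ (Fin n → ℤ)

/-- The `n`-dimensional algebraic torus `𝐓ⁿ = Spec ℂ[t₁^{±1},…,tₙ^{±1}]`. -/
abbrev Torus (n : ℕ) : Scheme := Spec (CommRingCat.of (LaurentRing n))

/-- The structure morphism `𝐓ⁿ ⟶ Spec ℂ`. -/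
abbrev Torus.str (n : ℕ) : Torus n ⟶ SpecC :=
  Spec.map (CommRingCat.ofHom (algebraMap ℂ (LaurentRing n)))

/-- `X`, together with the structure morphism `sX : X ⟶ Spec ℂ`, is a complex algebraic
variety: it is integral, separated and of finite type over `ℂ`. -/
def IsVarietyOver {X : Scheme} (sX : X ⟶ SpecC) : Prop :=
  IsIntegral X ∧ IsSeparated sX ∧ LocallyOfFiniteType sX ∧ QuasiCompact sX

/-- The product `X ×_ℂ Y` of two complex varieties. -/
abbrev prodC {X Y : Scheme} (sX : X ⟶ SpecC) (sY : Y ⟶ SpecC) : Scheme := pullback sX sY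

/-- `p : P ⟶ X` is a trivial `𝐓ⁿ`-bundle, i.e. `P` is isomorphic to `X ×_ℂ 𝐓ⁿ` over `X`. -/
def IsTrivialTorusBundle (n : ℕ) {P X : Scheme} (sX : X ⟶ SpecC) (p : P ⟶ X) : Prop :=
  ∃ e : P ≅ pullback sX (Torus.str n), e.hom ≫ pullback.fst sX (Torus.str n) = p

/-- `p : P ⟶ X` is a Zariski locally trivial `𝐓ⁿ`-bundle: every point of `X` has a Zariski
open neighbourhood `U` such that `p⁻¹(U) ≅ U ×_ℂ 𝐓ⁿ` as schemes over `U`. -/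
def IsLocTrivTorusBundle (n : ℕ) {P X : Scheme} (sX : X ⟶ SpecC) (p : P ⟶ X) : Prop :=
  ∀ x : X, ∃ U : X.Opens, x ∈ U ∧
    IsTrivialTorusBundle n (U.ι ≫ sX) (pullback.snd p U.ι)

/-- A scheme is factorial if all of its local rings are unique factorization domains. -/
def IsFactorialScheme (X : Scheme) : Prop :=
  ∀ x : X, ∃ h : IsDomain (X.presheaf.stalk x),
    haveI := h; UniqueFactorizationMonoid (X.presheaf.stalk x)

/-- A morphism is generically finite if it is dominant and finite over a dense open subset
of the target. -/
def IsGenericallyFinite {X Y : Scheme} (f : X ⟶ Y) : Prop :=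
  IsDominant f ∧ ∃ U : Y.Opens, Dense (U : Set Y) ∧ IsFinite (pullback.snd f U.ι)

/-- A complex variety `X` is `𝔸¹⁎`-uniruled if it admits a dominant generically finite
morphism from a variety of the form `Z × 𝔸¹⁎`. -/
def IsA1StarUniruled {X : Scheme} (sX : X ⟶ SpecC) : Prop :=
  ∃ (Z : Scheme) (sZ : Z ⟶ SpecC), IsVarietyOver sZ ∧
    ∃ f : prodC sZ (Torus.str 1) ⟶ X, IsDominant f ∧ IsGenericallyFinite f

/-!
On a chart `Spec B[ℤⁿ]` of a torus bundle `P`, a dominant morphism `H : P → Y` is moved by the `n`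
coordinate copies of the punctured line in `𝐓ⁿ`. If one of them, acting on `R = B[ℤⁿ]` with fraction
field `N`, does not fix `H` generically, then some function on `Y` becomes a non-constant element of
`N(T)`, so that `N(T)` is algebraic over the subring generated by `R` and the functions on `Y`.
Giving suitable elements of `R` general constant values then leaves a generically finite dominant
morphism `Z × 𝔸¹⁎ → Y`. So `H` is `𝐓ⁿ`-invariant if `Y` is not `𝔸¹⁎`-uniruled, and
factors through the base of the bundle.

If `X` is not `𝔸¹⁎`-uniruled, then `p ∘ Φ⁻¹` therefore descends to `ψ : Y → X`. Counting
transcendence degrees, `ψ` is generically algebraic, and an element algebraic over invariant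
functions is invariant, so `q ∘ Φ` descends as well, to a morphism `φ : X → Y`. It is inverse to `ψ`
because `p` and `q` are epimorphisms.
-/

open scoped Polynomial LaurentPolynomial TensorProduct

section GenericIntegrality

theorem exists_forall_isIntegral_pow_smul (A C : Type*) [CommRing A] [IsDomain A] [CommRing C]
    [Algebra A C] [Algebra.FiniteType A C] [Algebra.IsAlgebraic A C] :
    ∃ s : A, s ≠ 0 ∧ ∀ x : C, ∃ k : ℕ, _root_.IsIntegral A (s ^ k • x) := by
  obtain ⟨G, hG⟩ := Algebra.FiniteType.out (R := A) (A := C)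
  obtain ⟨s, hs, hsG⟩ := Algebra.IsAlgebraic.exists_integral_multiples A G
  refine ⟨s, hs, fun x ↦ ?_⟩
  have hx : x ∈ Algebra.adjoin A (G : Set C) := hG ▸ Algebra.mem_top
  induction hx using Algebra.adjoin_induction with
  | mem x hx => exact ⟨1, by simpa using hsG x hx⟩
  | algebraMap r => exact ⟨0, by simpa using isIntegral_algebraMap⟩
  | add x y _ _ hx hy =>
    obtain ⟨k, hk⟩ := hx
    obtain ⟨l, hl⟩ := hy
    refine ⟨k + l, ?_⟩
    rw [smul_add]
    refine .add ?_ ?_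
    · rw [add_comm, pow_add, mul_smul]
      exact hk.smul _
    · rw [pow_add, mul_smul]
      exact hl.smul _
  | mul x y _ _ hx hy =>
    obtain ⟨k, hk⟩ := hx
    obtain ⟨l, hl⟩ := hy
    refine ⟨k + l, ?_⟩
    rw [pow_add, ← smul_mul_smul_comm]
    exact hk.mul hl

variable {A C : Type*} [CommRing A] [CommRing C] [Algebra A C]

theorem isIntegral_away_tensorProduct {s : A}
    (hs : ∀ x : C, ∃ k : ℕ, _root_.IsIntegral A (s ^ k • x)) (A' : Type*) [CommRing A']
    [Algebra A A'] [IsLocalization.Away s A'] : Algebra.IsIntegral A' (A' ⊗[A] C) := by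
  refine ⟨fun z ↦ ?_⟩
  induction z using TensorProduct.induction_on with
  | zero => exact isIntegral_zero
  | add x y hx hy => exact hx.add hy
  | tmul a x =>
    obtain ⟨k, hk⟩ := hs x
    have hu : IsUnit (algebraMap A A' (s ^ k)) :=
      map_pow (algebraMap A A') s k ▸ (IsLocalization.Away.algebraMap_isUnit s).pow k
    have : a ⊗ₜ[A] x = (a * (↑hu.unit⁻¹ : A')) ⊗ₜ[A] (s ^ k • x) := by
      rw [← TensorProduct.smul_tmul, Algebra.smul_def, mul_comm a, ← mul_assoc, hu.mul_val_inv,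
        one_mul]
    rw [this]
    exact hk.tmul _

theorem exists_isPrime_comap_eq [FaithfulSMul A C] {s : A}
    (hs : ∀ x : C, ∃ k : ℕ, _root_.IsIntegral A (s ^ k • x)) (q : Ideal A) [q.IsPrime]
    (hq : s ∉ q) : ∃ Q : Ideal C, Q.IsPrime ∧ Q.comap (algebraMap A C) = q := by
  let A' := Localization.Away s
  have := isIntegral_away_tensorProduct hs A'
  have : Module.Flat A A' := IsLocalization.flat A' (.powers s)
  have hinj : Function.Injective (algebraMap A' (A' ⊗[A] C)) :=
    Algebra.TensorProduct.includeLeft_injective (S := A) (FaithfulSMul.algebraMap_injective A C)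
  have hdisj : Disjoint (Submonoid.powers s : Set A) q :=
    (Ideal.disjoint_powers_iff_notMem s ‹q.IsPrime›.isRadical).mpr hq
  have := IsLocalization.isPrime_of_isPrime_disjoint (.powers s) A' q ‹_› hdisj
  obtain ⟨Q, -, hQ, hQq⟩ := Ideal.exists_ideal_over_prime_of_isIntegral
    (q.map (algebraMap A A')) (⊥ : Ideal (A' ⊗[A] C))
    ((Ideal.comap_bot_of_injective _ hinj).trans_le bot_le)
  let ι : C →+* A' ⊗[A] C := Algebra.TensorProduct.includeRight.toRingHom
  have hι : ι.comp (algebraMap A C) = (algebraMap A' (A' ⊗[A] C)).comp (algebraMap A A') :=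
    Algebra.TensorProduct.includeLeftRingHom_comp_algebraMap.symm
  refine ⟨Q.comap ι, inferInstance, ?_⟩
  rw [Ideal.comap_comap, hι, ← Ideal.comap_comap, hQq]
  exact IsLocalization.under_map_of_isPrime_disjoint (.powers s) A' ‹_› hdisj

end GenericIntegrality

section Specialization

theorem exists_eval_natCast_ne_zero {σ A : Type*} [CommRing A] [IsDomain A] [CharZero A]
    {s : MvPolynomial σ A} (hs : s ≠ 0) :
    ∃ c : σ → ℕ, MvPolynomial.eval (fun i ↦ (c i : A)) s ≠ 0 := by
  by_contra! hcon
  refine hs (MvPolynomial.funext_set (fun _ ↦ Set.range (Nat.cast : ℕ → A))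
    (fun _ ↦ Set.infinite_range_of_injective Nat.cast_injective) fun x hx ↦ ?_)
  choose c hc using fun i ↦ hx i trivial
  rw [map_zero, ← hcon c]
  simp [hc]

theorem isAlgebraic_mvPolynomial_of_isTranscendenceBasis {ι A C : Type*} [CommRing A]
    [Nontrivial A] [CommRing C] [Algebra A C] [Algebra (MvPolynomial ι A) C] {x : ι → C}
    (hx : IsTranscendenceBasis A x)
    (h : algebraMap (MvPolynomial ι A) C = (MvPolynomial.aeval x : _ →ₐ[A] C).toRingHom) :
    Algebra.IsAlgebraic (MvPolynomial ι A) C := by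
  have := hx.isAlgebraic
  refine (Algebra.isAlgebraic_ringHom_iff_of_comp_eq hx.1.aevalEquiv (RingEquiv.refl C) ?_).mp this
  rw [h]
  exact RingHom.ext fun p ↦ hx.1.algebraMap_aevalEquiv p

variable {A S C : Type*} [CommRing A] [CommRing S] [CommRing C] [Algebra A S]
  [Algebra A C] [Algebra S C] (ev : S →ₐ[A] A)

theorem injective_algebraMap_quotient [IsScalarTower A S C] {Q I : Ideal C}
    (hQ : Q.comap (algebraMap S C) = RingHom.ker ev) (hI : I ≤ Q) :
    Function.Injective (algebraMap A (C ⧸ I)) := by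
  rw [injective_iff_map_eq_zero]
  intro a ha
  have haQ : algebraMap A S a ∈ Q.comap (algebraMap S C) := by
    rw [Ideal.mem_comap, ← IsScalarTower.algebraMap_apply]
    exact hI (Ideal.Quotient.eq_zero_iff_mem.mp ha)
  simpa [hQ] using haQ

theorem isAlgebraic_quotient [IsDomain A] {I : Ideal C}
    (hI : ∀ x, Ideal.Quotient.mk I (algebraMap S C x) = algebraMap A (C ⧸ I) (ev x)) {s : S}
    (hs : ∀ x : C, ∃ k : ℕ, _root_.IsIntegral S (s ^ k • x)) (hev : ev s ≠ 0) :
    Algebra.IsAlgebraic A (C ⧸ I) := by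
  refine ⟨fun x ↦ ?_⟩
  obtain ⟨x, rfl⟩ := Ideal.Quotient.mk_surjective x
  obtain ⟨k, hk⟩ := hs x
  refine .of_smul (y := ev s ^ k) (mem_nonZeroDivisors_of_ne_zero (pow_ne_zero _ hev)) ?_
  have hx : ev s ^ k • Ideal.Quotient.mk I x = Ideal.Quotient.mk I (s ^ k • x) := by
    simp_rw [Algebra.smul_def, map_mul, hI, map_pow]
  rw [hx]
  exact (hk.map_of_comp_eq ev.toRingHom (Ideal.Quotient.mk I)
    (RingHom.ext fun x ↦ (hI x).symm)).isAlgebraic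

theorem exists_isPrime_quotient_isAlgebraic_of_isTranscendenceBasis {A R C ι : Type*} [CommRing A]
    [CommRing R] [CommRing C] [IsDomain C] [Algebra A C] [Algebra R C] [FaithfulSMul A C]
    [CharZero A] [Algebra.FiniteType A C] {r : ι → R}
    (hr : IsTranscendenceBasis A fun i ↦ algebraMap R C (r i)) :
    ∃ p : Ideal R, p.IsPrime ∧ p.map (algebraMap R C) ≠ ⊤ ∧
      Function.Injective (algebraMap A (C ⧸ p.map (algebraMap R C))) ∧
      Algebra.IsAlgebraic A (C ⧸ p.map (algebraMap R C)) := by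
  have : IsDomain A := (FaithfulSMul.algebraMap_injective A C).isDomain _
  let S := MvPolynomial ι A
  let g : S →ₐ[A] C := MvPolynomial.aeval fun i ↦ algebraMap R C (r i)
  algebraize [g.toRingHom]
  have hg (i : ι) : algebraMap S C (.X i) = algebraMap R C (r i) := MvPolynomial.aeval_X _ i
  have : IsScalarTower A S C := .of_algebraMap_eq' g.comp_algebraMap.symm
  have : Algebra.FiniteType S C := .of_restrictScalars_finiteType A S C
  have : FaithfulSMul S C := (faithfulSMul_iff_algebraMap_injective _ _).mpr hr.1
  have : Algebra.IsAlgebraic S C := isAlgebraic_mvPolynomial_of_isTranscendenceBasis hr rfl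
  obtain ⟨s, hs, hsint⟩ := exists_forall_isIntegral_pow_smul S C
  obtain ⟨c, hc⟩ := exists_eval_natCast_ne_zero hs
  let ev : S →ₐ[A] A := MvPolynomial.aeval fun i ↦ (c i : A)
  have : (RingHom.ker ev).IsPrime := RingHom.ker_isPrime _
  obtain ⟨Q, hQ, hQev⟩ := exists_isPrime_comap_eq hsint (RingHom.ker ev) hc
  set p := Q.comap (algebraMap R C)
  have hpQ : p.map (algebraMap R C) ≤ Q := Ideal.map_comap_le
  have hmem (i : ι) : r i - c i ∈ p := by
    have : MvPolynomial.X i - (c i : S) ∈ Q.comap (algebraMap S C) := by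
      rw [hQev, RingHom.mem_ker, map_sub, map_natCast]
      exact sub_eq_zero.mpr (MvPolynomial.aeval_X _ i)
    simpa [p, hg] using this
  have hev : (Ideal.Quotient.mkₐ A (p.map (algebraMap R C))).comp g =
      (Algebra.ofId A (C ⧸ p.map (algebraMap R C))).comp ev := by
    ext i
    have := Ideal.Quotient.eq_zero_iff_mem.mpr (Ideal.mem_map_of_mem (algebraMap R C) (hmem i))
    simpa [g, ev, sub_eq_zero] using this
  exact ⟨p, inferInstance, fun h ↦ hQ.ne_top (top_le_iff.mp (h ▸ hpQ)),
    injective_algebraMap_quotient ev hQev hpQ,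
    isAlgebraic_quotient ev (DFunLike.congr_fun hev) hsint hc⟩

theorem exists_isPrime_quotient_isAlgebraic (A R C : Type*) [CommRing A] [CommRing R] [CommRing C]
    [IsDomain C] [Algebra A C] [Algebra R C] [FaithfulSMul A C] [CharZero A]
    [Algebra.FiniteType A C]
    [Algebra.IsAlgebraic (Algebra.adjoin A (Set.range (algebraMap R C))) C] :
    ∃ p : Ideal R, p.IsPrime ∧ p.map (algebraMap R C) ≠ ⊤ ∧
      Function.Injective (algebraMap A (C ⧸ p.map (algebraMap R C))) ∧
      Algebra.IsAlgebraic A (C ⧸ p.map (algebraMap R C)) := by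
  obtain ⟨t, htR, ht⟩ := exists_isTranscendenceBasis_subset (R := A) (Set.range (algebraMap R C))
  choose r hr using fun i : t ↦ htR i.2
  refine exists_isPrime_quotient_isAlgebraic_of_isTranscendenceBasis (r := r) ?_
  simpa only [hr] using ht

end Specialization

section RatFunc

/-- The embedding `R[T;T⁻¹] ⊆ N(T)` attached to an algebra `N` over `R`. -/
def laurentToRatFunc (R N : Type*) [CommRing R] [Field N] [Algebra R N] : R[T;T⁻¹] →+* RatFunc N :=
  LaurentPolynomial.eval₂ (RatFunc.C.comp (algebraMap R N)) (Units.mk0 RatFunc.X RatFunc.X_ne_zero)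

variable {R N : Type*} [CommRing R] [Field N] [Algebra R N]

theorem laurentToRatFunc_comp_C :
    (laurentToRatFunc R N).comp LaurentPolynomial.C = RatFunc.C.comp (algebraMap R N) :=
  RingHom.ext fun r ↦ by simp [laurentToRatFunc]

theorem laurentToRatFunc_toLaurent (f : R[X]) :
    laurentToRatFunc R N f.toLaurent = algebraMap N[X] (RatFunc N) (f.map (algebraMap R N)) := by
  rw [laurentToRatFunc, LaurentPolynomial.eval₂_toLaurent, ← Polynomial.eval₂_map, Units.val_mk0,
    ← RatFunc.aeval_X_left_eq_algebraMap, Polynomial.aeval_def, RatFunc.algebraMap_eq_C]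

theorem laurentToRatFunc_injective [FaithfulSMul R N] :
    Function.Injective (laurentToRatFunc R N) := by
  refine (injective_iff_map_eq_zero _).mpr fun f hf ↦ ?_
  obtain ⟨n, f', hf'⟩ := f.exists_T_pow
  have hf'0 : f' = 0 := by
    have := laurentToRatFunc_toLaurent (N := N) f'
    rwa [hf', map_mul, hf, zero_mul, eq_comm, map_eq_zero_iff _ (RatFunc.algebraMap_injective N),
      Polynomial.map_eq_zero_iff (FaithfulSMul.algebraMap_injective R N)] at this
  rwa [hf'0, map_zero, eq_comm, (LaurentPolynomial.isUnit_T _).mul_left_eq_zero] at hf'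

theorem isAlgebraic_of_isAlgebraic_adjoin_simple {B K L : Type*} [CommRing B] [IsDomain B]
    [Field K] [Field L] [Algebra B L] [Algebra K L]
    (hK : ∀ c : K, IsAlgebraic B (algebraMap K L c)) {z y : L} (hz : IsAlgebraic B z)
    (hy : IsAlgebraic (IntermediateField.adjoin K {z}) y) : IsAlgebraic B y := by
  let M : IntermediateField K L :=
    { (Subalgebra.algebraicClosure B L).toSubsemiring with
      algebraMap_mem' := hK
      inv_mem' := fun _ hx ↦ IsAlgebraic.inv hx }
  have hzM : IntermediateField.adjoin K {z} ≤ M :=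
    IntermediateField.adjoin_le_iff.mpr (Set.singleton_subset_iff.mpr hz)
  let f : IntermediateField.adjoin K {z} →+* Subalgebra.algebraicClosure B L :=
    (IntermediateField.inclusion hzM).toRingHom
  exact (hy.ringHom_of_comp_eq f (RingHom.id L) f.injective rfl).restrictScalars B

theorem isAlgebraic_ratFunc_C [IsFractionRing R N] {B : Type*} [CommRing B] [IsDomain B]
    [Algebra B (RatFunc N)] (hR : ∀ r : R, IsAlgebraic B (RatFunc.C (algebraMap R N r)))
    (c : N) : IsAlgebraic B (RatFunc.C c) := by
  obtain ⟨r, s, -, rfl⟩ := IsFractionRing.div_surjective R c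
  rw [map_div₀, div_eq_mul_inv]
  exact (hR r).mul (hR s).inv

theorem isAlgebraic_ratFunc_of_ne_C {N B : Type*} [Field N] [CommRing B] [IsDomain B]
    [Algebra B (RatFunc N)] (hN : ∀ c : N, IsAlgebraic B (RatFunc.C c)) {z : RatFunc N}
    (hzB : IsAlgebraic B z) (hz : ∀ c, z ≠ RatFunc.C c) : Algebra.IsAlgebraic B (RatFunc N) := by
  have := RatFunc.isAlgebraic_adjoin_simple_X' z (by simpa using hz)
  exact ⟨fun y ↦ isAlgebraic_of_isAlgebraic_adjoin_simple hN hzB (this.isAlgebraic y)⟩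

end RatFunc

section LaurentMonomials

variable (A : Type*) [CommRing A] {ι : Type*} [DecidableEq ι]

/-- The coordinate functions `tᵢ` on the torus with character lattice `ι → ℤ`. -/
abbrev coordMonomial (i : ι) : AddMonoidAlgebra A (ι → ℤ) :=
  .single (Pi.single i 1) 1

/-- The inclusion of the monoid of monomials into the lattice of Laurent monomials. -/
def monomialExponents (ι : Type*) : (ι →₀ ℕ) →+ (ι → ℤ) :=
  ((Nat.castAddMonoidHom ℤ).compLeft ι).comp Finsupp.coeFnAddHom

@[simp]
theorem monomialExponents_apply {ι : Type*} (s : ι →₀ ℕ) (i : ι) :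
    monomialExponents ι s i = s i := rfl

theorem monomialExponents_injective (ι : Type*) : Function.Injective (monomialExponents ι) :=
  fun _ _ h ↦ Finsupp.ext fun i ↦ Nat.cast_injective (congr_fun h i)

theorem aeval_coordMonomial :
    MvPolynomial.aeval (coordMonomial A (ι := ι)) =
      AddMonoidAlgebra.mapDomainAlgHom A A (monomialExponents ι) := by
  refine MvPolynomial.algHom_ext fun i ↦ ?_
  have hi : monomialExponents ι (Finsupp.single i 1) = Pi.single i 1 := by
    ext j
    simp [Finsupp.single_apply, Pi.single_apply, eq_comm]
  rw [MvPolynomial.aeval_X, AddMonoidAlgebra.mapDomainAlgHom_apply]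
  exact (congr_arg (AddMonoidAlgebra.single · 1) hi).symm.trans
    AddMonoidAlgebra.mapDomain_single.symm

theorem algebraicIndependent_coordMonomial : AlgebraicIndependent A (coordMonomial A (ι := ι)) := by
  rw [AlgebraicIndependent, aeval_coordMonomial]
  exact AddMonoidAlgebra.mapDomain_injective (monomialExponents_injective ι)

theorem single_monomialExponents_mem_adjoin (s : ι →₀ ℕ) (a : A) :
    .single (monomialExponents ι s) a ∈
      Algebra.adjoin A (Set.range (coordMonomial A (ι := ι))) := by
  rw [Algebra.adjoin_range_eq_range_aeval, aeval_coordMonomial]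
  exact ⟨.single s a, AddMonoidAlgebra.mapDomain_single⟩

theorem isAlgebraic_adjoin_coordMonomial [Finite ι] [IsDomain A] :
    Algebra.IsAlgebraic (Algebra.adjoin A (Set.range (coordMonomial A (ι := ι))))
      (AddMonoidAlgebra A (ι → ℤ)) := by
  set S := Algebra.adjoin A (Set.range (coordMonomial A (ι := ι)))
  have hS (s : ι →₀ ℕ) (a : A) :
      IsAlgebraic S (.single (monomialExponents ι s) a : AddMonoidAlgebra A (ι → ℤ)) :=
    isAlgebraic_algebraMap (⟨_, single_monomialExponents_mem_adjoin A s a⟩ : S)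
  refine ⟨fun x ↦ ?_⟩
  induction x using AddMonoidAlgebra.induction_linear with
  | zero => exact isAlgebraic_zero
  | add x y hx hy => exact hx.add hy
  | single s a =>
    let neg : ι →₀ ℕ := Finsupp.equivFunOnFinite.symm fun i ↦ (-s i).toNat
    let pos : ι →₀ ℕ := Finsupp.equivFunOnFinite.symm fun i ↦ (s i).toNat
    have hpos : monomialExponents ι neg + s = monomialExponents ι pos := by
      ext i
      simp only [Pi.add_apply, monomialExponents_apply, neg, pos,
        Finsupp.equivFunOnFinite_symm_apply_apply]
      lia
    have hmul : AddMonoidAlgebra.single (monomialExponents ι neg) (1 : A) * .single s a =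
        .single (monomialExponents ι pos) a := by
      rw [AddMonoidAlgebra.single_mul_single, hpos, one_mul]
    refine .of_mul (mem_nonZeroDivisors_of_ne_zero ?_) (hS neg 1) (hmul ▸ hS pos a)
    simp

theorem isTranscendenceBasis_coordMonomial [Finite ι] [IsDomain A] :
    IsTranscendenceBasis A (coordMonomial A (ι := ι)) :=
  (algebraicIndependent_coordMonomial A).isTranscendenceBasis_iff_isAlgebraic.mpr
    (isAlgebraic_adjoin_coordMonomial A)

end LaurentMonomials

section TranscendenceDegree

universe u

theorem trdeg_addMonoidAlgebra (A : Type u) [CommRing A] [IsDomain A] (ι : Type)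
    [Fintype ι] :
    Algebra.trdeg A (AddMonoidAlgebra A (ι → ℤ)) = Fintype.card ι := by
  classical
  simpa using (isTranscendenceBasis_coordMonomial A (ι := ι)).lift_cardinalMk_eq_trdeg.symm

theorem isAlgebraic_of_addMonoidAlgebra_injective {A B N : Type u} [CommRing A] [IsDomain A]
    [CommRing B] [IsDomain B] [Algebra A B] [Field N] {ι : Type} [Finite ι]
    [Algebra (AddMonoidAlgebra A (ι → ℤ)) N] [IsFractionRing (AddMonoidAlgebra A (ι → ℤ)) N]
    (κ : AddMonoidAlgebra B (ι → ℤ) →+* N) (hκ : Function.Injective κ)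
    (hA : (κ.comp (algebraMap B _)).comp (algebraMap A B) =
      (algebraMap (AddMonoidAlgebra A (ι → ℤ)) N).comp (algebraMap A _)) :
    Algebra.IsAlgebraic A B := by
  have := Fintype.ofFinite ι
  let L := AddMonoidAlgebra A (ι → ℤ)
  let := ((algebraMap L N).comp (algebraMap A _)).toAlgebra
  have : IsScalarTower A L N := .of_algebraMap_eq' rfl
  have : FaithfulSMul L N :=
    (faithfulSMul_iff_algebraMap_injective _ _).mpr (IsFractionRing.injective _ _)
  have : Algebra.IsAlgebraic L N := IsLocalization.isAlgebraic N (nonZeroDivisors L)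
  have : FaithfulSMul A B := by
    refine (faithfulSMul_iff_algebraMap_injective _ _).mpr
      (.of_comp (f := κ.comp (algebraMap B _)) ?_)
    rw [← RingHom.coe_comp, hA]
    exact (IsFractionRing.injective L N).comp (FaithfulSMul.algebraMap_injective _ _)
  let κ' : AddMonoidAlgebra B (ι → ℤ) →ₐ[A] N :=
    { κ with commutes' := fun a ↦ DFunLike.congr_fun hA a }
  have htrdeg : Algebra.trdeg A B + Fintype.card ι ≤ 0 + Fintype.card ι := calc
    Algebra.trdeg A B + Fintype.card ι
      = Algebra.trdeg A (AddMonoidAlgebra B (ι → ℤ)) := by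
        rw [← trdeg_addMonoidAlgebra B ι, trdeg_add_eq]
    _ ≤ Algebra.trdeg A N := trdeg_le_of_injective κ' hκ
    _ = 0 + Fintype.card ι := by
        rw [← trdeg_add_eq A L, trdeg_addMonoidAlgebra, trdeg_eq_zero (R := L), add_comm]
  exact trdeg_eq_zero_iff.mp <| nonpos_iff_eq_zero.mp <|
    (Cardinal.add_le_add_iff_of_lt_aleph0 Cardinal.natCast_lt_aleph0).mp htrdeg

end TranscendenceDegree

section SpecHom

universe u

/-- The morphism of affine schemes attached to an unbundled ring homomorphism. -/
abbrev specHom {R S : Type u} [CommRing R] [CommRing S] (f : R →+* S) :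
    Spec (.of S) ⟶ Spec (.of R) :=
  Spec.map (CommRingCat.ofHom f)

variable {R S U : Type u} [CommRing R] [CommRing S] [CommRing U]

theorem specHom_comp (f : R →+* S) (g : S →+* U) :
    specHom (g.comp f) = specHom g ≫ specHom f :=
  Spec.map_comp (CommRingCat.ofHom f) (CommRingCat.ofHom g)

theorem specHom_id : specHom (RingHom.id R) = 𝟙 _ := Spec.map_id _

theorem exists_specHom_eq (h : Spec (.of S) ⟶ Spec (.of R)) : ∃ f : R →+* S, specHom f = h :=
  ⟨(Spec.preimage h).hom, Spec.map_preimage h⟩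

theorem specHom_injective : Function.Injective (specHom : (R →+* S) → _) :=
  fun _ _ h ↦ congr_arg CommRingCat.Hom.hom (Spec.map_injective h)

theorem isDominant_specHom {f : R →+* S} (hf : Function.Injective f) : IsDominant (specHom f) := by
  refine ⟨(PrimeSpectrum.denseRange_comap_iff_ker_le_nilRadical f).mpr ?_⟩
  rw [(RingHom.injective_iff_ker_eq_bot f).mp hf]
  exact bot_le

theorem injective_of_isDominant_specHom [IsReduced R] {f : R →+* S} (hf : IsDominant (specHom f)) :
    Function.Injective f := by
  have := (PrimeSpectrum.denseRange_comap_iff_ker_le_nilRadical f).mp hf.denseRange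
  rw [nilradical_eq_zero] at this
  exact (RingHom.injective_iff_ker_eq_bot f).mpr (le_bot_iff.mp this)

theorem locallyOfFiniteType_specHom {f : R →+* S} :
    LocallyOfFiniteType (specHom f) ↔ f.FiniteType :=
  HasRingHomProperty.Spec_iff

end SpecHom

section GenericallyFinite

universe u

theorem isDominant_of_isOpenImmersion {X Y : Scheme.{u}} (f : X ⟶ Y) [IsOpenImmersion f]
    [Nonempty X] [IrreducibleSpace Y] : IsDominant f :=
  ⟨f.isOpenEmbedding.isOpen_range.dense (Set.range_nonempty _)⟩

theorem IsGenericallyFinite.iso_comp {V V' X : Scheme.{u}} (e : V' ≅ V) {f : V ⟶ X}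
    (hf : IsGenericallyFinite f) : IsGenericallyFinite (e.hom ≫ f) := by
  obtain ⟨_, U, hU, _⟩ := hf
  have hp : IsPullback (pullback.fst f U.ι ≫ e.inv) (pullback.snd f U.ι) (e.hom ≫ f) U.ι :=
    (IsPullback.of_hasPullback f U.ι).of_iso (Iso.refl _) e.symm (Iso.refl _) (Iso.refl _)
      (by simp) (by simp) (by simp) (by simp)
  refine ⟨inferInstance, U, hU, ?_⟩
  rw [← hp.isoPullback_inv_snd]
  infer_instance

theorem IsGenericallyFinite.of_isPullback {V X W U : Scheme.{u}} [IrreducibleSpace X] {f : V ⟶ X}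
    [IsDominant f] {h : W ⟶ V} {g : W ⟶ U} [IsFinite g] {k : U ⟶ X} [IsOpenImmersion k]
    [Nonempty U] (hp : IsPullback h g f k) : IsGenericallyFinite f := by
  refine ⟨‹_›, k.opensRange, k.opensRange.isOpen.dense (Set.range_nonempty k), ?_⟩
  have hp' : IsPullback h (g ≫ k.isoOpensRange.hom) f k.opensRange.ι :=
    hp.of_iso (Iso.refl _) (Iso.refl _) k.isoOpensRange (Iso.refl _) (by simp) (by simp) (by simp)
      (by simp)
  rw [← hp'.isoPullback_inv_snd]
  infer_instance

theorem isPullback_specHom_tensorProduct (A A' C : Type u) [CommRing A] [CommRing A'] [CommRing C]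
    [Algebra A A'] [Algebra A C] :
    IsPullback (specHom (Algebra.TensorProduct.includeRight (R := A) (A := A') (B := C)).toRingHom)
      (specHom (algebraMap A' (A' ⊗[A] C))) (specHom (algebraMap A C))
      (specHom (algebraMap A A')) :=
  (isPullback_SpecMap_of_isPushout _ _ _ _ (CommRingCat.isPushout_tensorProduct A A' C)).flip

theorem IsGenericallyFinite.of_isPullback_specHom {A C : Type u} [CommRing A] [IsDomain A]
    [CommRing C] [Algebra A C] [Algebra.FiniteType A C] [Algebra.IsAlgebraic A C]
    {V X : Scheme.{u}} [IrreducibleSpace X] {f : V ⟶ X} [IsDominant f] {h : Spec (.of C) ⟶ V}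
    {i : Spec (.of A) ⟶ X} [IsOpenImmersion i]
    (hp : IsPullback h (specHom (algebraMap A C)) f i) : IsGenericallyFinite f := by
  obtain ⟨s, hs0, hs⟩ := exists_forall_isIntegral_pow_smul A C
  let A' := Localization.Away s
  have := isIntegral_away_tensorProduct hs A'
  have : IsFinite (specHom (algebraMap A' (A' ⊗[A] C))) := by
    rw [IsFinite.SpecMap_iff]
    exact RingHom.finite_algebraMap.mpr Algebra.IsIntegral.finite
  have : IsDomain A' :=
    IsLocalization.isDomain_localization (powers_le_nonZeroDivisors_of_noZeroDivisors hs0)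
  have : IsOpenImmersion (specHom (algebraMap A A')) := .of_isLocalization s
  exact .of_isPullback ((isPullback_specHom_tensorProduct A A' C).paste_horiz hp)

theorem exists_isPullback_specHom {A : Type u} [CommRing A] {V X : Scheme.{u}} (f : V ⟶ X)
    [IsAffineHom f] (i : Spec (.of A) ⟶ X) :
    ∃ (C : Type u) (_ : CommRing C) (φ : A →+* C) (h : Spec (.of C) ⟶ V),
      IsPullback h (specHom φ) f i := by
  let W := pullback f i
  have : IsAffine W := isAffine_of_isAffineHom (pullback.snd f i)
  obtain ⟨φ, hφ⟩ := exists_specHom_eq (S := Γ(W, ⊤)) (W.isoSpec.inv ≫ pullback.snd f i)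
  exact ⟨Γ(W, ⊤), inferInstance, φ, W.isoSpec.inv ≫ pullback.fst f i,
    (IsPullback.of_hasPullback f i).of_iso W.isoSpec (Iso.refl _) (Iso.refl _) (Iso.refl _)
      (by simp) (by simp [hφ]) (by simp) (by simp)⟩

theorem IsGenericallyFinite.of_isAlgebraic {A K S : Type u} [CommRing A] [CommRing K] [IsDomain K]
    [CommRing S] [IsDomain S] [Algebra A S] [FaithfulSMul A S] [Algebra.IsAlgebraic A S]
    {X : Scheme.{u}} [IsIntegral X] [X.IsSeparated] {f : Spec (.of K) ⟶ X} [LocallyOfFiniteType f]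
    {i : Spec (.of A) ⟶ X} [IsOpenImmersion i] {κ : K →+* S} [IsOpenImmersion (specHom κ)]
    (h : specHom κ ≫ f = specHom (algebraMap A S) ≫ i) : IsGenericallyFinite f := by
  have hinj := FaithfulSMul.algebraMap_injective A S
  have : IsDomain A := hinj.isDomain _
  have : IsAffineHom f := by
    have : IsAffineHom (f ≫ terminal.from X) := by
      rw [terminal.comp_from]
      infer_instance
    exact .of_comp f (terminal.from X)
  have : IsDominant f := by
    have := isDominant_specHom hinj
    have := isDominant_of_isOpenImmersion i
    have : IsDominant (specHom κ ≫ f) := h ▸ inferInstance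
    exact .of_comp (specHom κ) f
  obtain ⟨C, _, φ, g, hp⟩ := exists_isPullback_specHom f i
  obtain ⟨ρ, hρ⟩ := exists_specHom_eq (hp.lift _ _ h)
  have : IsOpenImmersion g := MorphismProperty.of_isPullback hp.flip ‹_›
  have : IsOpenImmersion (specHom ρ) := by
    have : IsOpenImmersion (specHom ρ ≫ g) := by rwa [hρ, hp.lift_fst]
    exact .of_comp _ g
  have : Nonempty (Spec (.of C)) := ⟨specHom ρ (Nonempty.some inferInstance)⟩
  have : IsIntegral (Spec (.of C)) := isIntegral_of_isOpenImmersion g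
  have : IsDomain C := (affine_isIntegral_iff (.of C)).mp ‹_›
  have hρφ : ρ.comp φ = algebraMap A S :=
    specHom_injective (by rw [specHom_comp, hρ, hp.lift_snd])
  algebraize [φ]
  have : Algebra.FiniteType A C := by
    have : LocallyOfFiniteType (specHom φ) := MorphismProperty.of_isPullback hp ‹_›
    exact locallyOfFiniteType_specHom.mp this
  have : Algebra.IsAlgebraic A C :=
    .of_injective { ρ with commutes' := DFunLike.congr_fun hρφ : C →ₐ[A] S }
      (injective_of_isDominant_specHom (isDominant_of_isOpenImmersion _))
  exact .of_isPullback_specHom hp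

end GenericallyFinite

section Reduction

variable {R : Type*} [CommRing R] (p : Ideal R)

theorem ker_mapRingHom_mk (M : Type*) [AddCommMonoid M] :
    RingHom.ker (AddMonoidAlgebra.mapRingHom M (Ideal.Quotient.mk p)) =
      p.map (algebraMap R (AddMonoidAlgebra R M)) := by
  refine le_antisymm (fun x hx ↦ ?_) (Ideal.map_le_iff_le_comap.mpr fun r hr ↦ ?_)
  · have hcoeff (a : M) : x.coeff a ∈ p := by
      have := congr_arg (fun y ↦ y.coeff a) (RingHom.mem_ker.mp hx)
      simpa [Ideal.Quotient.eq_zero_iff_mem] using this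
    rw [← AddMonoidAlgebra.sum_coeff_single x]
    refine Ideal.sum_mem _ fun a _ ↦ ?_
    rw [← mul_one (x.coeff a), ← smul_eq_mul, ← AddMonoidAlgebra.smul_single, Algebra.smul_def]
    exact Ideal.mul_mem_right _ _ (Ideal.mem_map_of_mem _ (hcoeff a))
  · simp [Ideal.Quotient.eq_zero_iff_mem.mpr hr]

theorem mapRingHom_mk_surjective (M : Type*) [AddMonoid M] :
    Function.Surjective (AddMonoidAlgebra.mapRingHom M (Ideal.Quotient.mk p)) :=
  AddMonoidAlgebra.map_surjective (Ideal.Quotient.mk p : R →+ R ⧸ p) Ideal.Quotient.mk_surjective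

theorem exists_isLocalizationAway_quotient {S : Type*} [CommRing S] [Algebra R[T;T⁻¹] S]
    [Algebra R S] [IsScalarTower R R[T;T⁻¹] S] (f : R[T;T⁻¹]) [IsLocalization.Away f S] :
    ∃ κ : (R ⧸ p)[T;T⁻¹] →+* S ⧸ p.map (algebraMap R S),
      κ.comp (AddMonoidAlgebra.mapRingHom ℤ (Ideal.Quotient.mk p)) =
        (Ideal.Quotient.mk _).comp (algebraMap R[T;T⁻¹] S) ∧
      ∃ g, @IsLocalization.Away _ _ g _ _ κ.toAlgebra := by
  set π := AddMonoidAlgebra.mapRingHom ℤ (Ideal.Quotient.mk p)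
  have hπ : Function.Surjective π := mapRingHom_mk_surjective p ℤ
  have hker : p.map (algebraMap R S) = (RingHom.ker π).map (algebraMap R[T;T⁻¹] S) := by
    rw [ker_mapRingHom_mk, Ideal.map_map, ← IsScalarTower.algebraMap_eq]
  let g := (Ideal.Quotient.mk (p.map (algebraMap R S))).comp (algebraMap R[T;T⁻¹] S)
  have hg : RingHom.ker π ≤ RingHom.ker g := fun x hx ↦ by
    rw [RingHom.mem_ker, RingHom.comp_apply, Ideal.Quotient.eq_zero_iff_mem, hker]
    exact Ideal.mem_map_of_mem _ hx
  let κ := π.liftOfSurjective hπ ⟨g, hg⟩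
  have hκ : κ.comp π = g := π.liftOfRightInverse_comp _ _ ⟨g, hg⟩
  refine ⟨κ, hκ, π f, ?_⟩
  let := κ.toAlgebra
  have := IsLocalization.of_surjective (Submonoid.powers f) S π hπ (Ideal.Quotient.mk
    (p.map (algebraMap R S))) Ideal.Quotient.mk_surjective hκ.symm
    (by rw [Ideal.mk_ker, hker])
  rwa [Submonoid.map_powers] at this

theorem isDomain_of_isLocalizationAway {T S : Type*} [CommRing T] [IsDomain T] [CommRing S]
    [Nontrivial S] [Algebra T S] (g : T) [IsLocalization.Away g S] : IsDomain S := by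
  have hg : g ≠ 0 := by
    rintro rfl
    simpa using IsLocalization.Away.algebraMap_isUnit (S := S) (0 : T)
  exact IsLocalization.isDomain_of_le_nonZeroDivisors _
    (powers_le_nonZeroDivisors_of_noZeroDivisors hg)

end Reduction

section Uniruled

open scoped AlgebraMonoidAlgebra in
theorem isPullback_torus (B : Type) [CommRing B] [Algebra ℂ B] (n : ℕ) :
    IsPullback (specHom (algebraMap B (AddMonoidAlgebra B (Fin n → ℤ))))
      (specHom (AddMonoidAlgebra.mapRingHom (Fin n → ℤ) (algebraMap ℂ B)))
      (specHom (algebraMap ℂ B)) (Torus.str n) :=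
  isPullback_SpecMap_of_isPushout _ _ _ _
    (CommRingCat.isPushout_of_isPushout ℂ B (LaurentRing n) (AddMonoidAlgebra B (Fin n → ℤ)))

theorem isSeparated_of_isSeparated_hom_spec {X : Scheme} {R : CommRingCat} (s : X ⟶ Spec R)
    [IsSeparated s] : X.IsSeparated := by
  refine ⟨?_⟩
  rw [← terminal.comp_from s]
  infer_instance

theorem isVarietyOver_specHom {B : Type} [CommRing B] [IsDomain B] [Algebra ℂ B]
    [Algebra.FiniteType ℂ B] : IsVarietyOver (specHom (algebraMap ℂ B)) :=
  ⟨inferInstance, inferInstance,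
    locallyOfFiniteType_specHom.mpr (RingHom.finiteType_algebraMap.mpr inferInstance),
    inferInstance⟩

theorem charZero_of_hom_specC {D : Type} [CommRing D] [Nontrivial D] (s : Spec (.of D) ⟶ SpecC) :
    CharZero D := by
  obtain ⟨c, -⟩ := exists_specHom_eq s
  exact charZero_of_injective_ringHom c.injective

theorem IsGenericallyFinite.isA1StarUniruled {X : Scheme} (sX : X ⟶ SpecC) {B : Type}
    [CommRing B] [IsDomain B] [Algebra ℂ B] [Algebra.FiniteType ℂ B]
    {F : Spec (.of B[T;T⁻¹]) ⟶ X} (hF : IsGenericallyFinite F) : IsA1StarUniruled sX := by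
  let e₁ : AddMonoidAlgebra B ℤ ≃ₐ[B] AddMonoidAlgebra B (Fin 1 → ℤ) :=
    AddMonoidAlgebra.domCongr B B (AddEquiv.piUnique (fun _ : Fin 1 ↦ ℤ)).symm
  let e₂ : Spec (.of (AddMonoidAlgebra B (Fin 1 → ℤ))) ≅ Spec (.of B[T;T⁻¹]) :=
    Scheme.Spec.mapIso e₁.toRingEquiv.toCommRingCatIso.op
  have hfin := hF.iso_comp ((isPullback_torus B 1).isoPullback.symm ≪≫ e₂)
  exact ⟨_, _, isVarietyOver_specHom, _, hfin.1, hfin⟩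

theorem isA1StarUniruled_of_isAlgebraic {X : Scheme} {sX : X ⟶ SpecC} (hX : IsVarietyOver sX)
    {R S D : Type} [CommRing R] [CommRing S] [IsDomain S] [CommRing D] [Algebra ℂ R]
    [Algebra.FiniteType ℂ R] [Algebra R[T;T⁻¹] S] [Algebra R S] [IsScalarTower R R[T;T⁻¹] S]
    (f : R[T;T⁻¹]) [IsLocalization.Away f S] [Algebra D S] [FaithfulSMul D S]
    [Algebra.IsAlgebraic (Algebra.adjoin D (Set.range (algebraMap R S))) S]
    (F : Spec (.of R[T;T⁻¹]) ⟶ X) [LocallyOfFiniteType F] (j : Spec (.of D) ⟶ X)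
    [IsOpenImmersion j]
    (h : specHom (algebraMap R[T;T⁻¹] S) ≫ F = specHom (algebraMap D S) ≫ j) :
    IsA1StarUniruled sX := by
  obtain ⟨_, _, _, _⟩ := hX
  have := isSeparated_of_isSeparated_hom_spec sX
  have : IsOpenImmersion (specHom (algebraMap R[T;T⁻¹] S)) := .of_isLocalization f
  have : IsDomain D := (FaithfulSMul.algebraMap_injective D S).isDomain _
  have : CharZero D := charZero_of_hom_specC (j ≫ sX)
  have : Algebra.FiniteType D S := by
    have : LocallyOfFiniteType (specHom (algebraMap D S) ≫ j) := h ▸ inferInstance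
    exact RingHom.finiteType_algebraMap.mp
      (locallyOfFiniteType_specHom.mp (locallyOfFiniteType_of_comp _ j))
  obtain ⟨p, hp, hpS, hinj, halg⟩ := exists_isPrime_quotient_isAlgebraic D R S
  obtain ⟨κ, hκ, g, hg⟩ := exists_isLocalizationAway_quotient p (S := S) f
  set S' := S ⧸ p.map (algebraMap R S)
  have : Nontrivial S' := Ideal.Quotient.nontrivial_iff.mpr hpS
  have : FaithfulSMul D S' := (faithfulSMul_iff_algebraMap_injective _ _).mpr hinj
  algebraize [κ]
  have : IsDomain S' := isDomain_of_isLocalizationAway g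
  have : IsOpenImmersion (specHom κ) := .of_isLocalization g
  have : IsClosedImmersion (specHom (AddMonoidAlgebra.mapRingHom ℤ (Ideal.Quotient.mk p))) :=
    .spec_of_surjective _ (mapRingHom_mk_surjective p ℤ)
  have hF : IsGenericallyFinite
      (specHom (AddMonoidAlgebra.mapRingHom ℤ (Ideal.Quotient.mk p)) ≫ F) := by
    refine .of_isAlgebraic (A := D) (i := j) (κ := κ) ?_
    rw [← Category.assoc, ← specHom_comp, hκ, specHom_comp, Category.assoc, h, ← Category.assoc,
      ← specHom_comp]
  exact hF.isA1StarUniruled sX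

end Uniruled

section SpreadingOut

universe u

variable {X : Scheme.{u}} {D : Type u} [CommRing D] (j : Spec (.of D) ⟶ X) [IsOpenImmersion j]

theorem exists_eq_specHom_comp {A : Type u} [CommRing A] (g : Spec (.of A) ⟶ X)
    (hg : Set.range g ⊆ Set.range j) : ∃ δ : D →+* A, g = specHom δ ≫ j := by
  obtain ⟨δ, hδ⟩ := exists_specHom_eq (IsOpenImmersion.lift j g hg)
  exact ⟨δ, by rw [hδ, IsOpenImmersion.lift_fac]⟩

theorem exists_eq_specHom_comp_of_field {N : Type u} [Field N] (g : Spec (.of N) ⟶ X)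
    {x : Spec (.of N)} (hx : g x ∈ Set.range j) : ∃ δ : D →+* N, g = specHom δ ≫ j := by
  refine exists_eq_specHom_comp j g ?_
  rintro _ ⟨y, rfl⟩
  have : Subsingleton (Spec (.of N)) := inferInstanceAs (Subsingleton (PrimeSpectrum N))
  rwa [Subsingleton.elim y x]

theorem exists_specHom_away_comp_eq {T L : Type u} [CommRing T] [Field L] {F : Spec (.of T) ⟶ X}
    {τ : T →+* L} {γ : D →+* L} (hτ : specHom τ ≫ F = specHom γ ≫ j) :
    ∃ (f : T) (hf : IsUnit (τ f)) (δ : D →+* Localization.Away f),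
      specHom (algebraMap T (Localization.Away f)) ≫ F = specHom δ ≫ j ∧
      (IsLocalization.Away.lift f hf).comp δ = γ := by
  let x : Spec (.of L) := (⊥ : PrimeSpectrum L)
  have hx : specHom τ x ∈ F ⁻¹ᵁ j.opensRange := by
    change F (specHom τ x) ∈ Set.range j
    rw [← Scheme.Hom.comp_apply, hτ]
    simp
  obtain ⟨_, ⟨f, rfl⟩, hxf, hfj⟩ := PrimeSpectrum.isTopologicalBasis_basic_opens
    |>.exists_subset_of_mem_open hx (F ⁻¹ᵁ j.opensRange).isOpen
  have hf : IsUnit (τ f) := isUnit_iff_ne_zero.mpr hxf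
  obtain ⟨δ, hδ⟩ := exists_eq_specHom_comp j (specHom (algebraMap T (Localization.Away f)) ≫ F) (by
    rintro _ ⟨y, rfl⟩
    refine hfj ((PrimeSpectrum.localization_away_comap_range (Localization.Away f) f).subset ?_)
    exact Set.mem_range_self (f := PrimeSpectrum.comap _) y)
  refine ⟨f, hf, δ, hδ, specHom_injective ?_⟩
  rw [← cancel_mono j, specHom_comp, Category.assoc, ← hδ, ← Category.assoc, ← specHom_comp,
    IsLocalization.Away.lift_comp, hτ]

theorem awayLift_injective {T S L : Type*} [CommRing T] [CommRing S] [CommRing L] [Algebra T S]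
    {f : T} [IsLocalization.Away f S] {τ : T →+* L} (hτ : Function.Injective τ)
    (hf : IsUnit (τ f)) :
    Function.Injective (IsLocalization.Away.lift f hf : S →+* L) := by
  refine IsLocalization.injective_of_map_algebraMap_zero (M := .powers f) S _ fun x hx ↦ ?_
  rw [IsLocalization.Away.lift_eq, map_eq_zero_iff τ hτ] at hx
  rw [hx, map_zero]

theorem injective_of_specHom_comp_eq [IsIntegral X] {T S : Type u} [CommRing T] [CommRing S]
    [Nontrivial S] {τ : T →+* S} (hτ : Function.Injective τ) {F : Spec (.of T) ⟶ X} [IsDominant F]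
    {δ : D →+* S} (h : specHom τ ≫ F = specHom δ ≫ j) : Function.Injective δ := by
  have : Nonempty (Spec (.of D)) := .map (specHom δ) inferInstance
  have : IsDomain D := (affine_isIntegral_iff (.of D)).mp (isIntegral_of_isOpenImmersion j)
  have := isDominant_specHom hτ
  have : IsDominant (specHom δ ≫ j) := h ▸ inferInstance
  exact injective_of_isDominant_specHom (.of_comp_of_isOpenImmersion _ j)

end SpreadingOut

section Families

/-- A homomorphism `m : R → R[T;T⁻¹]` is a family of endomorphisms `mₜ` of `Spec R` parametrised by
the punctured line; it is unital if `m₁` is the identity. -/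
def IsUnitalFamily {R : Type*} [CommRing R] (m : R →+* R[T;T⁻¹]) : Prop :=
  (LaurentPolynomial.eval₂ (RingHom.id R) 1).comp m = RingHom.id R

namespace IsUnitalFamily

variable {R : Type*} [CommRing R] {m : R →+* R[T;T⁻¹]} (hm : IsUnitalFamily m)

include hm

theorem injective : Function.Injective m :=
  Function.LeftInverse.injective (g := LaurentPolynomial.eval₂ (RingHom.id R) 1)
    (DFunLike.congr_fun hm)

variable (N : Type*) [Field N] [Algebra R N] [IsFractionRing R N]

theorem laurentToRatFunc_comp_injective :
    Function.Injective ((laurentToRatFunc R N).comp m) :=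
  laurentToRatFunc_injective.comp hm.injective

/-- The generic member of a unital family of endomorphisms of `Spec R`, on the function field. -/
def genericMap : N →+* RatFunc N :=
  IsFractionRing.lift (hm.laurentToRatFunc_comp_injective N)

theorem genericMap_comp_algebraMap :
    (hm.genericMap N).comp (algebraMap R N) = (laurentToRatFunc R N).comp m :=
  RingHom.ext fun _ ↦ by rw [genericMap, RingHom.comp_apply, IsFractionRing.lift_algebraMap]

variable {N}

theorem eq_of_genericMap_eq_C {a c : N} (h : hm.genericMap N a = RatFunc.C c) : a = c := by
  have : Nontrivial R := (algebraMap R N).domain_nontrivial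
  obtain ⟨p, q, hq, rfl⟩ := IsFractionRing.div_surjective R a
  obtain ⟨r, w, hw, rfl⟩ := IsFractionRing.div_surjective R c
  have hq' : algebraMap R N q ≠ 0 := IsFractionRing.to_map_ne_zero_of_mem_nonZeroDivisors hq
  have hw' : algebraMap R N w ≠ 0 := IsFractionRing.to_map_ne_zero_of_mem_nonZeroDivisors hw
  have hgen (x : R) : hm.genericMap N (algebraMap R N x) = laurentToRatFunc R N (m x) :=
    DFunLike.congr_fun (hm.genericMap_comp_algebraMap N) x
  have hC (x : R) : RatFunc.C (algebraMap R N x) = laurentToRatFunc R N (LaurentPolynomial.C x) :=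
    (DFunLike.congr_fun laurentToRatFunc_comp_C x).symm
  have hm' (x : R) : LaurentPolynomial.eval₂ (RingHom.id R) 1 (m x) = x := DFunLike.congr_fun hm x
  have hmul : m p * LaurentPolynomial.C w = LaurentPolynomial.C r * m q := by
    refine laurentToRatFunc_injective (N := N) ?_
    rwa [map_div₀, map_div₀, div_eq_div_iff (by simpa using hq') (by simpa using hw'), hgen, hgen,
      hC, hC, ← map_mul, ← map_mul] at h
  have hpw : p * w = r * q := by
    simpa [hm'] using congr_arg (LaurentPolynomial.eval₂ (RingHom.id R) 1) hmul
  rw [div_eq_div_iff hq' hw', ← map_mul, ← map_mul, hpw]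

end IsUnitalFamily

universe u

variable {R : Type u} [CommRing R] {m : R →+* R[T;T⁻¹]} {X : Scheme.{u}} {G : Spec (.of R) ⟶ X}

/-- The morphism `G` is constant along the curves `t ↦ mₜ(x)` traced by the family `m`. -/
def IsConstantAlong (m : R →+* R[T;T⁻¹]) (G : Spec (.of R) ⟶ X) : Prop :=
  specHom m ≫ G = specHom LaurentPolynomial.C ≫ G

theorem IsUnitalFamily.isDominant (hm : IsUnitalFamily m) (G : Spec (.of R) ⟶ X) [IsDominant G] :
    IsDominant (specHom m ≫ G) := by
  have : IsDominant (specHom (LaurentPolynomial.eval₂ (RingHom.id R) 1) ≫ specHom m ≫ G) := by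
    rwa [← Category.assoc, ← specHom_comp, hm, specHom_id, Category.id_comp]
  exact .of_comp (specHom (LaurentPolynomial.eval₂ (RingHom.id R) 1)) _

variable {N D : Type u} [Field N] [Algebra R N] [CommRing D] {j : Spec (.of D) ⟶ X} {δ : D →+* N}
  [IsFractionRing R N] (hG : specHom (algebraMap R N) ≫ G = specHom δ ≫ j)

include hG

theorem IsUnitalFamily.specHom_laurentToRatFunc_comp (hm : IsUnitalFamily m) :
    specHom (laurentToRatFunc R N) ≫ specHom m ≫ G = specHom ((hm.genericMap N).comp δ) ≫ j := by
  rw [← Category.assoc, ← specHom_comp, ← hm.genericMap_comp_algebraMap, specHom_comp,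
    Category.assoc, hG, ← Category.assoc, ← specHom_comp]

theorem IsUnitalFamily.isConstantAlong [X.IsSeparated] (hm : IsUnitalFamily m)
    (hδ : ∀ d, ∃ c, hm.genericMap N (δ d) = RatFunc.C c) : IsConstantAlong m G := by
  have hδC : (hm.genericMap N).comp δ = RatFunc.C.comp δ := RingHom.ext fun d ↦ by
    obtain ⟨c, hc⟩ := hδ d
    rw [RingHom.comp_apply, hc, RingHom.comp_apply, hm.eq_of_genericMap_eq_C hc]
  have : IsDomain R := (IsFractionRing.injective R N).isDomain _
  have := isDominant_specHom (laurentToRatFunc_injective (R := R) (N := N))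
  refine ext_of_isDominant (specHom (laurentToRatFunc R N)) ?_
  rw [hm.specHom_laurentToRatFunc_comp hG, hδC, specHom_comp, Category.assoc, ← hG,
    ← Category.assoc, ← specHom_comp, ← Category.assoc, ← specHom_comp, laurentToRatFunc_comp_C]

omit hG

theorem isAlgebraic_adjoin_of_ne_C {R N D S : Type*} [CommRing R] [Field N] [Algebra R N]
    [IsFractionRing R N] [CommRing D] [CommRing S] [Algebra R S] [Algebra D S]
    {ν : S →+* RatFunc N} (hν : Function.Injective ν)
    (hνR : ν.comp (algebraMap R S) = RatFunc.C.comp (algebraMap R N)) {d : D}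
    (hd : ∀ c, ν (algebraMap D S d) ≠ RatFunc.C c) :
    Algebra.IsAlgebraic (Algebra.adjoin D (Set.range (algebraMap R S))) S := by
  have : IsDomain S := hν.isDomain ν
  set B := Algebra.adjoin D (Set.range (algebraMap R S))
  let := (ν.comp (algebraMap B S)).toAlgebra
  have hR (r : R) : IsAlgebraic B (RatFunc.C (algebraMap R N r)) := by
    rw [← RingHom.comp_apply, ← hνR]
    exact isAlgebraic_algebraMap (A := RatFunc N) (⟨_, Algebra.subset_adjoin ⟨r, rfl⟩⟩ : B)
  have := isAlgebraic_ratFunc_of_ne_C (isAlgebraic_ratFunc_C hR)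
    (isAlgebraic_algebraMap (algebraMap D B d)) hd
  exact .of_injective ({ ν with commutes' := fun _ ↦ rfl } : S →ₐ[B] RatFunc N) hν

end Families

theorem IsUnitalFamily.isA1StarUniruled_of_genericMap_ne_C {X : Scheme} {sX : X ⟶ SpecC}
    (hX : IsVarietyOver sX) {R N D : Type} [CommRing R] [Algebra ℂ R] [Algebra.FiniteType ℂ R]
    [Field N] [Algebra R N] [IsFractionRing R N] [CommRing D] {m : R →+* R[T;T⁻¹]}
    (hm : IsUnitalFamily m) (hmR : m.FiniteType) (G : Spec (.of R) ⟶ X) [IsDominant G]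
    [LocallyOfFiniteType G] (j : Spec (.of D) ⟶ X) [IsOpenImmersion j] {δ : D →+* N}
    (hδ : specHom (algebraMap R N) ≫ G = specHom δ ≫ j) {d : D}
    (hd : ∀ c, hm.genericMap N (δ d) ≠ RatFunc.C c) : IsA1StarUniruled sX := by
  have := hX.1
  have := hm.isDominant G
  have : LocallyOfFiniteType (specHom m) := locallyOfFiniteType_specHom.mpr hmR
  have hRN : Function.Injective (laurentToRatFunc R N) := laurentToRatFunc_injective
  obtain ⟨f, hf, δ', hδ', hγ⟩ :=
    exists_specHom_away_comp_eq (D := D) j (hm.specHom_laurentToRatFunc_comp hδ)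
  let S := Localization.Away f
  let ν : S →+* RatFunc N := IsLocalization.Away.lift f hf
  have hνT : ν.comp (algebraMap R[T;T⁻¹] S) = laurentToRatFunc R N :=
    IsLocalization.Away.lift_comp f hf
  have hνR : ν.comp (algebraMap R S) = RatFunc.C.comp (algebraMap R N) := by
    rw [← laurentToRatFunc_comp_C, ← hνT]
    rfl
  have hν : Function.Injective ν := awayLift_injective hRN hf
  have : IsDomain S := hν.isDomain ν
  have hTS : Function.Injective (algebraMap R[T;T⁻¹] S) := .of_comp (f := ν) (by
    rwa [← RingHom.coe_comp, hνT])
  algebraize [δ']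
  have : FaithfulSMul D S := (faithfulSMul_iff_algebraMap_injective _ _).mpr
    (injective_of_specHom_comp_eq (D := D) j hTS hδ')
  have := isAlgebraic_adjoin_of_ne_C hν hνR (d := d)
    fun c ↦ (DFunLike.congr_fun hγ d).trans_ne (hd c)
  exact isA1StarUniruled_of_isAlgebraic hX f (specHom m ≫ G) j hδ'

theorem IsUnitalFamily.isConstantAlong_of_not_isA1StarUniruled {X : Scheme} {sX : X ⟶ SpecC}
    (hX : IsVarietyOver sX) (hX' : ¬ IsA1StarUniruled sX) {R : Type} [CommRing R] [IsDomain R]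
    [Algebra ℂ R] [Algebra.FiniteType ℂ R] {m : R →+* R[T;T⁻¹]} (hm : IsUnitalFamily m)
    (hmR : m.FiniteType) (G : Spec (.of R) ⟶ X) [IsDominant G] [LocallyOfFiniteType G] :
    IsConstantAlong m G := by
  have := hX.2.1
  have := isSeparated_of_isSeparated_hom_spec sX
  let N := FractionRing R
  let η : Spec (.of N) := (⊥ : PrimeSpectrum N)
  obtain ⟨D, j, _, hj, -⟩ := Scheme.exists_affine_mem_range_and_range_subset
    (Opens.mem_top ((specHom (algebraMap R N) ≫ G) η))
  obtain ⟨δ, hδ⟩ := exists_eq_specHom_comp_of_field (D := D) j _ hj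
  refine hm.isConstantAlong hδ fun d ↦ ?_
  by_contra! hd
  exact hX' (hm.isA1StarUniruled_of_genericMap_ne_C hX hmR G j hδ hd)

section SplitTorus

universe u

/-- The split torus `Spec B[t₁^{±1},…,tₙ^{±1}]` of rank `n` over `Spec B`. -/
abbrev splitTorus (B : Type u) [CommRing B] (n : ℕ) : Scheme.{u} :=
  Spec (.of (AddMonoidAlgebra B (Fin n → ℤ)))

/-- The projection of a split torus onto its base. -/
abbrev splitTorus.proj (B : Type u) [CommRing B] (n : ℕ) : splitTorus B n ⟶ Spec (.of B) :=
  specHom (algebraMap B (AddMonoidAlgebra B (Fin n → ℤ)))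

/-- The unit section of a split torus. -/
abbrev splitTorus.unit (B : Type u) [CommRing B] (n : ℕ) : Spec (.of B) ⟶ splitTorus B n :=
  specHom (Bialgebra.counitAlgHom B (AddMonoidAlgebra B (Fin n → ℤ))).toRingHom

theorem splitTorus.unit_proj (B : Type u) [CommRing B] (n : ℕ) :
    splitTorus.unit B n ≫ splitTorus.proj B n = 𝟙 _ := by
  rw [← specHom_comp, ← specHom_id]
  exact congr_arg specHom (Bialgebra.counitAlgHom B _).comp_algebraMap

theorem splitTorus.proj_surjective (B : Type u) [CommRing B] (n : ℕ) :
    Function.Surjective (splitTorus.proj B n) := fun x ↦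
  ⟨splitTorus.unit B n x, by
    rw [← Scheme.Hom.comp_apply, splitTorus.unit_proj, Scheme.Hom.id_base, TopCat.id_app]⟩

end SplitTorus

section Coaction

/-- The coaction on the group algebra `B[M]` of the punctured line acting through the cocharacter
`χ`; for `M = ℤⁿ` and `χ` the `i`-th coordinate, this is the scaling of `tᵢ`. -/
def coaction (B : Type*) {M : Type*} [CommRing B] [AddCommGroup M] (χ : M →+ ℤ) :
    AddMonoidAlgebra B M →ₐ[B] (AddMonoidAlgebra B M)[T;T⁻¹] :=
  AddMonoidAlgebra.lift B _ M
    { toFun s := .single (χ s.toAdd) (.single s.toAdd 1)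
      map_one' := by
        rw [toAdd_one, map_zero]
        rfl
      map_mul' s t := by
        rw [AddMonoidAlgebra.single_mul_single, AddMonoidAlgebra.single_mul_single, toAdd_mul,
          map_add, one_mul] }

variable {B M : Type*} [CommRing B] [AddCommGroup M] (χ : M →+ ℤ)

theorem coaction_single (s : M) (b : B) :
    coaction B χ (.single s b) = .single (χ s) (.single s b) := by
  rw [coaction, AddMonoidAlgebra.lift_single, MonoidHom.coe_mk, OneHom.coe_mk, toAdd_ofAdd,
    AddMonoidAlgebra.smul_single, AddMonoidAlgebra.smul_single, smul_eq_mul, mul_one]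

theorem coaction_comp_algebraMap :
    (coaction B χ).toRingHom.comp (algebraMap B _) =
      LaurentPolynomial.C.comp (algebraMap B (AddMonoidAlgebra B M)) :=
  (coaction B χ).comp_algebraMap

theorem isUnitalFamily_coaction : IsUnitalFamily (coaction B χ).toRingHom := by
  have h (s : M) (b : B) : LaurentPolynomial.eval₂ (RingHom.id (AddMonoidAlgebra B M)) 1
      (coaction B χ (.single s b)) = .single s b := by
    rw [coaction_single, LaurentPolynomial.single_eq_C_mul_T, LaurentPolynomial.eval₂_C_mul_T,
      one_zpow, Units.val_one, mul_one, RingHom.id_apply]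
  exact AddMonoidAlgebra.ringHom_ext (h 0) fun s ↦ h s 1

theorem finiteType_coaction [AddMonoid.FG M] : (coaction B χ).toRingHom.FiniteType := by
  refine RingHom.FiniteType.of_comp_finiteType (f := algebraMap B _) ?_
  rw [AlgHom.toRingHom_eq_coe, AlgHom.comp_algebraMap, RingHom.finiteType_algebraMap]
  exact .trans (S := AddMonoidAlgebra B M) inferInstance inferInstance

/-- The specialization `B[M][T;T⁻¹] → B[M]` of the parameter `T` at the monomials prescribed by
`θ`. -/
def evalMonomial (B : Type*) [CommRing B] (θ : ℤ →+ M) :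
    (AddMonoidAlgebra B M)[T;T⁻¹] →ₐ[AddMonoidAlgebra B M] AddMonoidAlgebra B M :=
  AddMonoidAlgebra.lift _ _ ℤ
    { toFun k := .single (θ k.toAdd) 1
      map_one' := by simp [AddMonoidAlgebra.one_def]
      map_mul' s t := by simp [AddMonoidAlgebra.single_mul_single] }

theorem evalMonomial_comp_coaction (θ : ℤ →+ M) :
    (evalMonomial B θ).toRingHom.comp (coaction B χ).toRingHom =
      AddMonoidAlgebra.mapDomainRingHom B (AddMonoidHom.id M + θ.comp χ) := by
  have h (s : M) (b : B) : evalMonomial B θ (coaction B χ (.single s b)) =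
      AddMonoidAlgebra.mapDomainRingHom B (AddMonoidHom.id M + θ.comp χ) (.single s b) := by
    rw [coaction_single, evalMonomial, AddMonoidAlgebra.lift_single, MonoidHom.coe_mk,
      OneHom.coe_mk, smul_eq_mul, AddMonoidAlgebra.single_mul_single]
    simp
  exact AddMonoidAlgebra.ringHom_ext (h 0) fun s ↦ h s 1

end Coaction

section Invariance

universe u

variable {B : Type u} [CommRing B] {X : Scheme.{u}}

theorem specHom_mapDomainRingHom_comp_eq {M : Type} [AddCommGroup M] {χ : M →+ ℤ}
    {G : Spec (.of (AddMonoidAlgebra B M)) ⟶ X} (hG : IsConstantAlong (coaction B χ).toRingHom G)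
    (θ : ℤ →+ M) :
    specHom (AddMonoidAlgebra.mapDomainRingHom B (AddMonoidHom.id M + θ.comp χ)) ≫ G = G := by
  have hC : (evalMonomial B θ).toRingHom.comp LaurentPolynomial.C = RingHom.id _ :=
    (evalMonomial B θ).comp_algebraMap
  rw [← evalMonomial_comp_coaction, specHom_comp, Category.assoc, hG, ← Category.assoc,
    ← specHom_comp, hC, specHom_id, Category.id_comp]

variable {n : ℕ} {G : splitTorus B n ⟶ X}

/-- Invariance of a morphism from a split torus under the coordinate subgroups of the torus. -/
def IsTorusInvariant (G : splitTorus B n ⟶ X) : Prop :=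
  ∀ i, IsConstantAlong (coaction B (Pi.evalAddMonoidHom (fun _ : Fin n ↦ ℤ) i)).toRingHom G

namespace IsTorusInvariant

theorem exists_mapDomainRingHom_comp_eq (hG : IsTorusInvariant G) (t : Finset (Fin n)) :
    ∃ π : (Fin n → ℤ) →+ (Fin n → ℤ), (∀ s, ∀ i ∈ t, π s i = 0) ∧
      specHom (AddMonoidAlgebra.mapDomainRingHom B π) ≫ G = G := by
  induction t using Finset.induction_on with
  | empty =>
    refine ⟨.id _, by simp, ?_⟩
    rw [AddMonoidAlgebra.mapDomainRingHom_id, specHom_id, Category.id_comp]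
  | insert i t _ ih =>
    obtain ⟨π, hπ, hπG⟩ := ih
    let θ : ℤ →+ (Fin n → ℤ) := -AddMonoidHom.single (fun _ : Fin n ↦ ℤ) i
    let ρ := AddMonoidHom.id _ + θ.comp (Pi.evalAddMonoidHom (fun _ : Fin n ↦ ℤ) i)
    refine ⟨ρ.comp π, fun s j hj ↦ ?_, ?_⟩
    · obtain rfl | hji := eq_or_ne j i
      · simp [ρ, θ]
      · simp [ρ, θ, hji, hπ s j (Finset.mem_of_mem_insert_of_ne hj hji)]
    · rw [AddMonoidAlgebra.mapDomainRingHom_comp, specHom_comp, Category.assoc, hπG]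
      exact specHom_mapDomainRingHom_comp_eq (hG i) θ

theorem proj_unit_comp (hG : IsTorusInvariant G) :
    splitTorus.proj B n ≫ splitTorus.unit B n ≫ G = G := by
  obtain ⟨π, hπ, hπG⟩ := hG.exists_mapDomainRingHom_comp_eq Finset.univ
  have hπ0 (s : Fin n → ℤ) : π s = 0 := funext fun i ↦ hπ s i (Finset.mem_univ i)
  have hπ' : AddMonoidAlgebra.mapDomainRingHom B π = (algebraMap B _).comp
      (Bialgebra.counitAlgHom B (AddMonoidAlgebra B (Fin n → ℤ))).toRingHom := by
    ext <;> simp [hπ0]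
  rwa [hπ', specHom_comp, Category.assoc] at hπG

end IsTorusInvariant

end Invariance

section LocalSections

universe u

variable {P X Y : Scheme.{u}} (p : P ⟶ X)

theorem epi_of_local_sections (h : ∀ x : X, ∃ (U : Scheme.{u}) (u : U ⟶ X) (s : U ⟶ P),
    IsOpenImmersion u ∧ x ∈ Set.range u ∧ s ≫ p = u) : Epi p := by
  choose U u s hu hx hs using h
  let 𝒰 : X.OpenCover := .mkOfCovers X U u (fun x ↦ ⟨x, hx x⟩) hu
  refine ⟨fun a b hab ↦ ?_⟩
  have hu' (x : X) : u x ≫ a = u x ≫ b := by rw [← hs, Category.assoc, hab, Category.assoc]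
  exact Scheme.Cover.hom_ext 𝒰 _ _ hu'

theorem exists_comp_eq_of_local_sections (H : P ⟶ Y)
    (h : ∀ x : X, ∃ (U V : Scheme.{u}) (u : U ⟶ X) (v : V ⟶ P) (w : V ⟶ U) (s : U ⟶ V),
      IsOpenImmersion u ∧ IsPullback v w p u ∧ x ∈ Set.range u ∧ s ≫ w = 𝟙 U ∧
      w ≫ s ≫ v ≫ H = v ≫ H) : ∃ ψ : X ⟶ Y, p ≫ ψ = H := by
  choose U V u v w s hu hpb hx hs hH using h
  let 𝒰 : X.OpenCover := .mkOfCovers X U u (fun x ↦ ⟨x, hx x⟩) hu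
  have hcompat (i j : X) : pullback.fst (u i) (u j) ≫ s i ≫ v i ≫ H =
      pullback.snd (u i) (u j) ≫ s j ≫ v j ≫ H := by
    have hl : (pullback.snd (u i) (u j) ≫ s j ≫ v j) ≫ p = pullback.fst (u i) (u j) ≫ u i := by
      rw [Category.assoc, Category.assoc, (hpb j).w, reassoc_of% hs j, pullback.condition]
    rw [← (hpb i).lift_snd _ _ hl, Category.assoc, hH, ← Category.assoc, (hpb i).lift_fst,
      Category.assoc, Category.assoc]
  let ψ := Scheme.Cover.glueMorphisms 𝒰 (fun i ↦ s i ≫ v i ≫ H) hcompat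
  have hψ (i : X) : u i ≫ ψ = s i ≫ v i ≫ H := 𝒰.ι_glueMorphisms _ hcompat i
  have hψH (i : X) : pullback.fst p (u i) ≫ p ≫ ψ = pullback.fst p (u i) ≫ H := by
    rw [pullback.condition_assoc, hψ, ← (hpb i).isoPullback_inv_fst,
      ← (hpb i).isoPullback_inv_snd, Category.assoc, hH, Category.assoc]
  exact ⟨ψ, Scheme.Cover.hom_ext (𝒰.pullback₁ p) _ _ hψH⟩

end LocalSections

section TorusBundles

theorem isDomain_of_isOpenImmersion {X : Scheme} [IsIntegral X] {B : Type} [CommRing B]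
    (u : Spec (.of B) ⟶ X) [IsOpenImmersion u] {x : X} (hx : x ∈ Set.range u) : IsDomain B := by
  have : Nonempty (Spec (.of B)) := ⟨hx.choose⟩
  exact (affine_isIntegral_iff (.of B)).mp (isIntegral_of_isOpenImmersion u)

theorem exists_algebra_finiteType {X : Scheme} (sX : X ⟶ SpecC) [LocallyOfFiniteType sX]
    {B : Type} [CommRing B] (u : Spec (.of B) ⟶ X) [IsOpenImmersion u] :
    ∃ _ : Algebra ℂ B, Algebra.FiniteType ℂ B := by
  obtain ⟨c, hc⟩ := exists_specHom_eq (u ≫ sX)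
  exact ⟨c.toAlgebra, locallyOfFiniteType_specHom.mp (hc ▸ inferInstance)⟩

/-- A chart of a torus bundle: a trivialization over an affine open subscheme of the base. -/
structure IsTorusChart (n : ℕ) {P X : Scheme} (p : P ⟶ X) {B : Type} [CommRing B]
    (u : Spec (.of B) ⟶ X) (v : splitTorus B n ⟶ P) : Prop where
  isOpenImmersion : IsOpenImmersion u
  isPullback : IsPullback v (splitTorus.proj B n) p u

namespace IsTorusChart

variable {n : ℕ} {P X : Scheme} {p : P ⟶ X} {B : Type} [CommRing B] {u : Spec (.of B) ⟶ X}
  {v : splitTorus B n ⟶ P}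

theorem isOpenImmersion_total (h : IsTorusChart n p u v) : IsOpenImmersion v := by
  have := h.isOpenImmersion
  rw [← h.isPullback.isoPullback_hom_fst]
  infer_instance

theorem range_total (h : IsTorusChart n p u v) : Set.range v = p ⁻¹' Set.range u := by
  rw [← Scheme.Pullback.range_fst, ← h.isPullback.isoPullback_hom_fst, Scheme.Hom.comp_base,
    TopCat.coe_comp, Set.range_comp, (Surjective.surj (f := h.isPullback.isoPullback.hom)).range_eq,
    Set.image_univ]

end IsTorusChart

theorem exists_comp_eq_of_isTorusInvariant {n : ℕ} {P X Y : Scheme} {p : P ⟶ X} (H : P ⟶ Y)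
    (hH : ∀ x : X, ∃ (B : Type) (_ : CommRing B) (u : Spec (.of B) ⟶ X) (v : splitTorus B n ⟶ P),
      IsTorusChart n p u v ∧ x ∈ Set.range u ∧ IsTorusInvariant (v ≫ H)) :
    ∃ ψ : X ⟶ Y, p ≫ ψ = H := by
  refine exists_comp_eq_of_local_sections p H fun x ↦ ?_
  obtain ⟨B, _, u, v, h, hx, hv⟩ := hH x
  exact ⟨_, _, u, v, _, _, h.isOpenImmersion, h.isPullback, hx, splitTorus.unit_proj B n,
    hv.proj_unit_comp⟩

namespace IsLocTrivTorusBundle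

variable {n : ℕ} {P X : Scheme} {sX : X ⟶ SpecC} {p : P ⟶ X} (hp : IsLocTrivTorusBundle n sX p)

include hp

theorem exists_isTorusChart {O : X.Opens} {x : X} (hx : x ∈ O) :
    ∃ (B : Type) (_ : CommRing B) (u : Spec (.of B) ⟶ X) (v : splitTorus B n ⟶ P),
      IsTorusChart n p u v ∧ x ∈ Set.range u ∧ Set.range u ⊆ O := by
  obtain ⟨U, hxU, e, he⟩ := hp x
  obtain ⟨B, u, hu, hxu, huO⟩ :=
    Scheme.exists_affine_mem_range_and_range_subset (show x ∈ U ⊓ O from ⟨hxU, hx⟩)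
  let k := IsOpenImmersion.lift U.ι u (by
    rw [Scheme.Opens.range_ι]
    exact fun y hy ↦ (huO hy).1)
  have hk : k ≫ U.ι = u := IsOpenImmersion.lift_fac _ _ _
  obtain ⟨c, hc⟩ := exists_specHom_eq (S := B) (k ≫ U.ι ≫ sX)
  algebraize [c]
  have hB := hc ▸ (isPullback_torus B n).flip
  have hU : IsPullback (e.hom ≫ pullback.snd _ _) (pullback.snd p U.ι) (Torus.str n) (U.ι ≫ sX) :=
    (IsPullback.of_hasPullback (U.ι ≫ sX) (Torus.str n)).flip.of_iso e.symm (Iso.refl _)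
      (Iso.refl _) (Iso.refl _) (by simp) (by simp [← he]) (by simp) (by simp)
  have hP := (hB.of_right' hU).paste_horiz (.of_hasPullback p U.ι)
  rw [hk] at hP
  exact ⟨B, _, u, _, ⟨hu, hP⟩, hxu, fun y hy ↦ (huO hy).2⟩

theorem epi : Epi p := by
  refine epi_of_local_sections p fun x ↦ ?_
  obtain ⟨B, _, u, v, h, hx, -⟩ := hp.exists_isTorusChart (Opens.mem_top x)
  refine ⟨_, u, splitTorus.unit B n ≫ v, h.isOpenImmersion, hx, ?_⟩
  rw [Category.assoc, h.isPullback.w, reassoc_of% splitTorus.unit_proj B n]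

theorem surjective : Surjective p := by
  refine ⟨fun x ↦ ?_⟩
  obtain ⟨B, _, u, v, h, ⟨z, rfl⟩, -⟩ := hp.exists_isTorusChart (Opens.mem_top x)
  obtain ⟨w, rfl⟩ := splitTorus.proj_surjective B n z
  exact ⟨v w, by rw [← Scheme.Hom.comp_apply, h.isPullback.w, Scheme.Hom.comp_apply]⟩

theorem locallyOfFiniteType : LocallyOfFiniteType p := by
  have h (y : P) : ∃ (V : Scheme.{0}) (v : V ⟶ P), IsOpenImmersion v ∧ y ∈ Set.range v ∧
      LocallyOfFiniteType (v ≫ p) := by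
    obtain ⟨B, _, u, v, h, hx, -⟩ := hp.exists_isTorusChart (Opens.mem_top (p y))
    refine ⟨_, v, h.isOpenImmersion_total, h.range_total ▸ hx, ?_⟩
    have := h.isOpenImmersion
    have : LocallyOfFiniteType (splitTorus.proj B n) :=
      locallyOfFiniteType_specHom.mpr (RingHom.finiteType_algebraMap.mpr inferInstance)
    rw [h.isPullback.w]
    infer_instance
  choose V v hv hy hft using h
  have : IsZariskiLocalAtSource @LocallyOfFiniteType :=
    HasRingHomProperty.instIsZariskiLocalAtSource (Q := RingHom.FiniteType)
  exact IsZariskiLocalAtSource.of_openCover (P := @LocallyOfFiniteType)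
    (Scheme.Cover.mkOfCovers P V v (fun y ↦ ⟨y, hy y⟩) hv : P.OpenCover) hft

theorem isDominant_of_isTorusChart [IsIntegral X] {B : Type} [CommRing B] [Nontrivial B]
    {u : Spec (.of B) ⟶ X} {v : splitTorus B n ⟶ P} (h : IsTorusChart n p u v) :
    IsDominant v := by
  refine ⟨dense_iff_inter_open.mpr fun W hW ⟨y, hy⟩ ↦ ?_⟩
  obtain ⟨B', _, u', v', h', hy', -⟩ := hp.exists_isTorusChart (Opens.mem_top (p y))
  have := h.isOpenImmersion
  have := h'.isOpenImmersion
  have := h.isOpenImmersion_total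
  have := isDomain_of_isOpenImmersion u' hy'
  obtain ⟨_, ⟨a, rfl⟩, b, hb⟩ := nonempty_preirreducible_inter u.isOpenEmbedding.isOpen_range
    u'.isOpenEmbedding.isOpen_range (Set.range_nonempty u) ⟨_, hy'⟩
  obtain ⟨b, rfl⟩ := splitTorus.proj_surjective B' n b
  obtain ⟨y', rfl⟩ : y ∈ Set.range v' := h'.range_total ▸ hy'
  have hb' : v' b ∈ Set.range v := by
    rw [h.range_total]
    exact ⟨a, by rw [← hb, ← Scheme.Hom.comp_apply, ← h'.isPullback.w, Scheme.Hom.comp_apply]⟩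
  obtain ⟨z, hz, hz'⟩ := nonempty_preirreducible_inter (hW.preimage v'.continuous)
    (v.isOpenEmbedding.isOpen_range.preimage v'.continuous) ⟨y', hy⟩ ⟨b, hb'⟩
  exact ⟨v' z, hz, hz'⟩

theorem exists_comp_eq_of_not_isA1StarUniruled {Y : Scheme} {sY : Y ⟶ SpecC}
    (hX : IsVarietyOver sX) (hY : IsVarietyOver sY) (hY' : ¬ IsA1StarUniruled sY) (H : P ⟶ Y)
    [IsDominant H] [LocallyOfFiniteType H] : ∃ ψ : X ⟶ Y, p ≫ ψ = H := by
  have := hX.1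
  have := hX.2.2.1
  refine exists_comp_eq_of_isTorusInvariant (n := n) H fun x ↦ ?_
  obtain ⟨B, _, u, v, h, hx, -⟩ := hp.exists_isTorusChart (Opens.mem_top x)
  have := h.isOpenImmersion
  have := h.isOpenImmersion_total
  have := isDomain_of_isOpenImmersion u hx
  have := hp.isDominant_of_isTorusChart h
  obtain ⟨_, hB⟩ := exists_algebra_finiteType sX u
  have : Algebra.FiniteType ℂ (AddMonoidAlgebra B (Fin n → ℤ)) := hB.trans inferInstance
  exact ⟨B, _, u, v, h, hx, fun i ↦
    (isUnitalFamily_coaction _).isConstantAlong_of_not_isA1StarUniruled hY hY'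
      (finiteType_coaction _) (v ≫ H)⟩

end IsLocTrivTorusBundle

end TorusBundles

section Inverse

theorem exists_eq_C_of_isAlgebraic {A B N : Type*} [CommRing A] [CommRing B] [Algebra A B]
    [Algebra.IsAlgebraic A B] [Field N] (ν : B →+* RatFunc N) {ι : A →+* N}
    (hι : Function.Injective ι) (h : ν.comp (algebraMap A B) = RatFunc.C.comp ι) (b : B) :
    ∃ c, ν b = RatFunc.C c := by
  by_contra hb
  obtain ⟨f, hf, hfb⟩ := Algebra.IsAlgebraic.isAlgebraic (R := A) b
  refine RatFunc.transcendental_of_ne_C _ hb ⟨f.map ι, (Polynomial.map_ne_zero_iff hι).mpr hf, ?_⟩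
  rw [Polynomial.aeval_def, Polynomial.eval₂_map, RatFunc.algebraMap_eq_C, ← h,
    ← Polynomial.hom_eval₂, ← Polynomial.aeval_def, hfb, map_zero]

theorem IsUnitalFamily.exists_genericMap_eq_C {A B R N : Type*} [CommRing A] [CommRing B]
    [Algebra A B] [Algebra.IsAlgebraic A B] [CommRing R] [Field N] [Algebra R N]
    [IsFractionRing R N] {m : R →+* R[T;T⁻¹]} (hm : IsUnitalFamily m) {a : A →+* R}
    (ha : Function.Injective a) (hma : m.comp a = LaurentPolynomial.C.comp a) {δ : B →+* N}
    (hδ : δ.comp (algebraMap A B) = (algebraMap R N).comp a) (b : B) :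
    ∃ c, hm.genericMap N (δ b) = RatFunc.C c := by
  have hRa : Function.Injective ((algebraMap R N).comp a) := (IsFractionRing.injective R N).comp ha
  refine exists_eq_C_of_isAlgebraic ((hm.genericMap N).comp δ) hRa ?_ b
  rw [RingHom.comp_assoc, hδ, ← RingHom.comp_assoc, hm.genericMap_comp_algebraMap,
    RingHom.comp_assoc, hma, ← RingHom.comp_assoc, laurentToRatFunc_comp_C, RingHom.comp_assoc]

variable {n : ℕ} {P Q X Y : Scheme} {p : P ⟶ X} {q : Q ⟶ Y} {F : P ⟶ Q} {ψ : Y ⟶ X}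

theorem IsTorusChart.isTorusInvariant_comp [Y.IsSeparated] {A B N : Type} [CommRing A]
    [IsDomain A] [CommRing B] [IsDomain B] [Field N] [Algebra (AddMonoidAlgebra A (Fin n → ℤ)) N]
    [IsFractionRing (AddMonoidAlgebra A (Fin n → ℤ)) N]
    {u : Spec (.of A) ⟶ X} {v : splitTorus A n ⟶ P} (h : IsTorusChart n p u v)
    {u' : Spec (.of B) ⟶ Y} {v' : splitTorus B n ⟶ Q} (h' : IsTorusChart n q u' v')
    (hF : F ≫ q ≫ ψ = p) (hu' : Set.range u' ⊆ ψ ⁻¹' Set.range u)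
    {κ : AddMonoidAlgebra B (Fin n → ℤ) →+* N} (hκ : Function.Injective κ)
    (hκF : specHom (algebraMap (AddMonoidAlgebra A (Fin n → ℤ)) N) ≫ v ≫ F = specHom κ ≫ v') :
    IsTorusInvariant (v ≫ F ≫ q) := by
  have := h.isOpenImmersion
  obtain ⟨α, hα⟩ := exists_eq_specHom_comp u (u' ≫ ψ) (by
    rintro _ ⟨z, rfl⟩
    exact hu' ⟨z, rfl⟩)
  have hκq : specHom (algebraMap (AddMonoidAlgebra A (Fin n → ℤ)) N) ≫ v ≫ F ≫ q =
      specHom (κ.comp (algebraMap B _)) ≫ u' := by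
    rw [specHom_comp, Category.assoc, ← h'.isPullback.w, ← reassoc_of% hκF]
  have hαA : (κ.comp (algebraMap B _)).comp α = (algebraMap _ N).comp
      (algebraMap A (AddMonoidAlgebra A (Fin n → ℤ))) := by
    apply specHom_injective
    rw [← cancel_mono u, specHom_comp α, Category.assoc, ← hα, ← reassoc_of% hκq, hF,
      h.isPullback.w, specHom_comp (algebraMap A _), Category.assoc]
  algebraize [α]
  have := isAlgebraic_of_addMonoidAlgebra_injective κ hκ hαA
  exact fun i ↦ (isUnitalFamily_coaction _).isConstantAlong hκq
    ((isUnitalFamily_coaction _).exists_genericMap_eq_C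
      (FaithfulSMul.algebraMap_injective A _) (coaction_comp_algebraMap _) hαA)

namespace IsLocTrivTorusBundle

variable {sX : X ⟶ SpecC} {sY : Y ⟶ SpecC} (hp : IsLocTrivTorusBundle n sX p)
  (hq : IsLocTrivTorusBundle n sY q)

include hp hq

theorem exists_comp_eq_of_comp_eq [IsIntegral X] [Y.IsSeparated] [IsIntegral Y] [IsDominant F]
    (hF : F ≫ q ≫ ψ = p) : ∃ φ : X ⟶ Y, p ≫ φ = F ≫ q := by
  refine exists_comp_eq_of_isTorusInvariant (n := n) _ fun x ↦ ?_
  obtain ⟨A, _, u, v, h, hx, -⟩ := hp.exists_isTorusChart (Opens.mem_top x)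
  refine ⟨A, _, u, v, h, hx, ?_⟩
  have := h.isOpenImmersion
  have := isDomain_of_isOpenImmersion u hx
  have := hp.isDominant_of_isTorusChart h
  let N := FractionRing (AddMonoidAlgebra A (Fin n → ℤ))
  have := isDominant_specHom (IsFractionRing.injective (AddMonoidAlgebra A (Fin n → ℤ)) N)
  set g := specHom (algebraMap (AddMonoidAlgebra A (Fin n → ℤ)) N) ≫ v ≫ F with hg
  let η : Spec (.of N) := (⊥ : PrimeSpectrum N)
  have hη : q (g η) ∈ ψ ⁻¹ᵁ u.opensRange := by
    change ψ (q (g η)) ∈ Set.range u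
    rw [← Scheme.Hom.comp_apply, ← Scheme.Hom.comp_apply, hg, Category.assoc, Category.assoc,
      hF, h.isPullback.w]
    simp
  obtain ⟨B, _, u', v', h', hη', hu'⟩ := hq.exists_isTorusChart hη
  have := h'.isOpenImmersion
  have := h'.isOpenImmersion_total
  have := isDomain_of_isOpenImmersion u' hη'
  have hgη : g η ∈ Set.range v' := by rwa [h'.range_total]
  obtain ⟨κ, hκ⟩ := exists_eq_specHom_comp_of_field v' g hgη
  have hκinj : Function.Injective κ := by
    have : IsDominant (specHom κ ≫ v') := hκ ▸ inferInstance
    exact injective_of_isDominant_specHom (.of_comp_of_isOpenImmersion _ v')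
  exact h.isTorusInvariant_comp h' hF hu' hκinj hκ

theorem exists_iso_of_not_isA1StarUniruled (hX : IsVarietyOver sX) (hY : IsVarietyOver sY)
    (hX' : ¬ IsA1StarUniruled sX) (Φ : P ≅ Q) : ∃ φ : X ≅ Y, Φ.hom ≫ q = p ≫ φ.hom := by
  have := hX.1
  have := hY.1
  have := hY.2.1
  have := isSeparated_of_isSeparated_hom_spec sY
  have := hp.surjective
  have := hp.locallyOfFiniteType
  have := hp.epi
  have := hq.epi
  obtain ⟨ψ, hψ⟩ := hq.exists_comp_eq_of_not_isA1StarUniruled hY hX hX' (Φ.inv ≫ p)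
  obtain ⟨φ, hφ⟩ := hp.exists_comp_eq_of_comp_eq hq (F := Φ.hom) (ψ := ψ) (by
    rw [hψ, Iso.hom_inv_id_assoc])
  refine ⟨⟨φ, ψ, ?_, ?_⟩, hφ.symm⟩
  · rw [← cancel_epi p, reassoc_of% hφ, hψ, Iso.hom_inv_id_assoc, Category.comp_id]
  · rw [← cancel_epi q, reassoc_of% hψ, hφ, Iso.inv_hom_id_assoc, Category.comp_id]

end IsLocTrivTorusBundle

theorem isLocTrivTorusBundle_fst (n : ℕ) {X : Scheme} (sX : X ⟶ SpecC) :
    IsLocTrivTorusBundle n sX (pullback.fst sX (Torus.str n)) := by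
  refine fun x ↦ ⟨⊤, trivial, ?_⟩
  have h : IsPullback (pullback.snd (pullback.fst sX (Torus.str n)) (⊤ : X.Opens).ι)
      (pullback.fst _ _ ≫ pullback.snd _ _) ((⊤ : X.Opens).ι ≫ sX) (Torus.str n) :=
    ((IsPullback.of_hasPullback _ _).paste_horiz (IsPullback.of_hasPullback sX _).flip).flip
  exact ⟨h.isoPullback, h.isoPullback_hom_fst⟩

end Inverse

theorem bundle_cancellation_not_uniruled_general (n : ℕ) {X Y : Scheme} (sX : X ⟶ SpecC)
    (sY : Y ⟶ SpecC) (hX : IsVarietyOver sX) (hY : IsVarietyOver sY)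
    (hnur : ¬ IsA1StarUniruled sX ∨ ¬ IsA1StarUniruled sY) :
    (∀ (P Q : Scheme) (p : P ⟶ X) (q : Q ⟶ Y),
      IsLocTrivTorusBundle n sX p → IsLocTrivTorusBundle n sY q →
      ∀ Φ : P ≅ Q, ∃ φ : X ≅ Y, Φ.hom ≫ q = p ≫ φ.hom) ∧
    (∀ Φ : prodC sX (Torus.str n) ≅ prodC sY (Torus.str n),
      ∃ φ : X ≅ Y,
        Φ.hom ≫ pullback.fst sY (Torus.str n) = pullback.fst sX (Torus.str n) ≫ φ.hom) := by
  have descend (P Q : Scheme) (p : P ⟶ X) (q : Q ⟶ Y) (hp : IsLocTrivTorusBundle n sX p)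
      (hq : IsLocTrivTorusBundle n sY q) (Φ : P ≅ Q) :
      ∃ φ : X ≅ Y, Φ.hom ≫ q = p ≫ φ.hom := by
    obtain hX' | hY' := hnur
    · exact hp.exists_iso_of_not_isA1StarUniruled hq hX hY hX' Φ
    · obtain ⟨φ, hφ⟩ := hq.exists_iso_of_not_isA1StarUniruled hp hY hX hY' Φ.symm
      refine ⟨φ.symm, ?_⟩
      rw [Iso.symm_hom, Iso.eq_comp_inv, Category.assoc, ← hφ, Iso.symm_hom, Iso.hom_inv_id_assoc]
  exact ⟨descend, descend _ _ _ _ (isLocTrivTorusBundle_fst n sX) (isLocTrivTorusBundle_fst n sY)⟩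

/-- Strong cancellation for Zariski locally trivial `𝐓ⁿ`-bundles over non `𝔸¹⁎`-uniruled
varieties: if `X` or `Y` is a smooth variety which is not `𝔸¹⁎`-uniruled, then every
isomorphism of abstract varieties `Φ : P ≅ Q` between total spaces of Zariski locally
trivial `𝐓ⁿ`-bundles `p : P → X`, `q : Q → Y` descends to an isomorphism `φ : X ≅ Y`
with `q ∘ Φ = φ ∘ p`.  In particular, strong cancellation holds for the products
`X × 𝐓ⁿ` and `Y × 𝐓ⁿ` of algebraic tori with non `𝔸¹⁎`-uniruled smooth varieties. -/
theorem bundle_cancellation_not_uniruled (n : ℕ)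
    {X Y : Scheme} (sX : X ⟶ SpecC) (sY : Y ⟶ SpecC)
    (hX : IsVarietyOver sX) (hY : IsVarietyOver sY)
    (hXsm : IsSmooth sX) (hYsm : IsSmooth sY)
    (hnur : ¬ IsA1StarUniruled sX ∨ ¬ IsA1StarUniruled sY) :
    (∀ (P Q : Scheme) (p : P ⟶ X) (q : Q ⟶ Y),
      IsLocTrivTorusBundle n sX p → IsLocTrivTorusBundle n sY q →
      ∀ Φ : P ≅ Q, ∃ φ : X ≅ Y, Φ.hom ≫ q = p ≫ φ.hom) ∧
    (∀ Φ : prodC sX (Torus.str n) ≅ prodC sY (Torus.str n),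
      ∃ φ : X ≅ Y,
        Φ.hom ≫ pullback.fst sY (Torus.str n) =
          pullback.fst sX (Torus.str n) ≫ φ.hom) :=
  bundle_cancellation_not_uniruled_general n sX sY hX hY hnur

end
end

section
/- Let X be a complex affine variety such that X × 𝐓ⁿ is isomorphic to 𝐓^{n+m} for some n ≥ 1, m ≥ 0. Then X is isomorphic to the torus 𝐓^m. -/
open AlgebraicGeometry CategoryTheory CategoryTheory.Limits TopologicalSpace

noncomputable section

/-!
The unit section of the torus embeds `X` as a closed subscheme of the affine scheme `X × 𝐓ⁿ`, so
`X = Spec R`, and `R` is a domain because `R[ℤⁿ] ≃ k[ℤⁿ⁺ᵐ]` is one. An isomorphism of schemes need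
not respect the structure morphisms, so `ψ : k[ℤⁿ⁺ᵐ] ≃ R[ℤⁿ]` is only an isomorphism of rings. It
maps units to units, which are monomials, and it maps each `c` in the field `k` to a constant,
because a monomial of nonzero degree does not remain a monomial after adding `1`. Hence `ψ` is
graded along a surjection of lattices `δ : ℤⁿ⁺ᵐ → ℤⁿ`. Comparing the components of degree `0`
gives `R ≃ k[ker δ]`, and `ker δ ≃ ℤᵐ`.
-/

section Monomials

open AddMonoidAlgebra

variable {k R G : Type*}

theorem exists_eq_single_of_mul_eq_single [Semiring R] [NoZeroDivisors R] [Add G]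
    [TwoUniqueSums G] {f g : R[G]} {c : G} {r : R} (hr : r ≠ 0) (hfg : f * g = single c r) :
    ∃ a s, f = single a s := by
  have : Nonempty G := ⟨c⟩
  have hg : g.coeff.support.Nonempty := by
    rw [Finsupp.support_nonempty_iff, ne_eq, coeff_eq_zero]
    rintro rfl
    exact hr (single_eq_zero.mp (hfg.symm.trans (mul_zero f)))
  have add_eq_of_unique {p : G × G} (hp : p ∈ f.coeff.support ×ˢ g.coeff.support)
      (hu : UniqueAdd f.coeff.support g.coeff.support p.1 p.2) : p.1 + p.2 = c := by
    by_contra hne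
    have hcoeff := coeff_mul_add_of_uniqueAdd hu
    rw [hfg, coeff_single, Finsupp.single_eq_of_ne hne] at hcoeff
    rw [Finset.mem_product, Finsupp.mem_support_iff, Finsupp.mem_support_iff] at hp
    exact mul_ne_zero hp.1 hp.2 hcoeff.symm
  have hf : f.coeff.support.card ≤ 1 := by
    by_contra! hf
    obtain ⟨p, hp, q, hq, hpq, hup, huq⟩ := TwoUniqueSums.uniqueAdd_of_one_lt_card
      (hf.trans_le (Nat.le_mul_of_pos_right _ hg.card_pos))
    obtain ⟨hqf, hqg⟩ := Finset.mem_product.mp hq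
    obtain ⟨h₁, h₂⟩ := hup hqf hqg
      ((add_eq_of_unique hq huq).trans (add_eq_of_unique hp hup).symm)
    exact hpq (Prod.ext h₁.symm h₂.symm)
  obtain ⟨a, s, has⟩ := Finsupp.card_support_le_one'.mp hf
  exact ⟨a, s, coeff_injective has⟩

variable [Semiring R] [Nontrivial R] [NoZeroDivisors R] [AddMonoid G] [TwoUniqueSums G]

theorem exists_eq_single_of_isUnit {f : R[G]} (hf : IsUnit f) : ∃ a r, f = single a r := by
  obtain ⟨g, hfg⟩ := hf.exists_right_inv
  exact exists_eq_single_of_mul_eq_single one_ne_zero hfg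

theorem exists_map_eq_single_zero [DivisionSemiring k] (ψ : k →+* R[G]) (c : k) :
    ∃ r, ψ c = single 0 r := by
  have exists_eq_single (x : k) : ∃ a r, ψ x = single a r := by
    obtain rfl | hx := eq_or_ne x 0
    · exact ⟨0, 0, by simp⟩
    · exact exists_eq_single_of_isUnit (hx.isUnit.map ψ)
  obtain ⟨a, r, hc⟩ := exists_eq_single c
  obtain ⟨b, s, hc1⟩ := exists_eq_single (c + 1)
  have hsum : single a r + single 0 1 = single b s := by
    rw [← hc1, map_add, hc, map_one, AddMonoidAlgebra.one_def]
  obtain rfl | ha := eq_or_ne a 0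
  · exact ⟨r, hc⟩
  have h0 : 1 = Finsupp.single b s 0 := by
    simpa [Finsupp.single_eq_of_ne ha.symm] using congr_arg (fun f ↦ f.coeff 0) hsum
  have hb : b = 0 := by
    by_contra hb
    exact one_ne_zero (h0.trans (Finsupp.single_eq_of_ne (Ne.symm hb)))
  have hr : r = 0 := by
    simpa [hb, Finsupp.single_eq_of_ne ha] using congr_arg (fun f ↦ f.coeff a) hsum
  exact ⟨0, by rw [hc, hr, single_zero, single_zero]⟩

end Monomials

section Graded

open AddMonoidAlgebra

variable {k R G H : Type*}

/-- The ring homomorphism `ψ : k[H] → R[G]` is graded along `δ : H → G`: it maps the component of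
degree `h` into the component of degree `δ h`. It need not be linear over a map `k → R`. -/
def IsGradedAlong [Semiring k] [Semiring R] [AddMonoid G] [AddMonoid H] (ψ : k[H] →+* R[G])
    (δ : H →+ G) : Prop :=
  ∀ h c, ∃ r, ψ (single h c) = single (δ h) r

theorem exists_isGradedAlong [DivisionSemiring k] [Semiring R] [Nontrivial R] [NoZeroDivisors R]
    [AddMonoid G] [TwoUniqueSums G] [AddGroup H] (ψ : k[H] →+* R[G]) :
    ∃ δ : H →+ G, IsGradedAlong ψ δ := by
  have isUnit_single (h : H) : IsUnit (single h (1 : k)) :=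
    (Group.isUnit (Multiplicative.ofAdd h)).map (of k H)
  choose d ρ hd using fun h ↦ exists_eq_single_of_isUnit ((isUnit_single h).map ψ)
  have ρ_ne_zero (h : H) : ρ h ≠ 0 := by
    rw [← single_ne_zero (m := d h), ← hd]
    exact ((isUnit_single h).map ψ).ne_zero
  have d_eq {h : H} {a : G} {r : R} (hr : ψ (single h 1) = single a r) : d h = a := by
    rw [hd] at hr
    exact ((single_inj.mp hr).resolve_right fun h0 ↦ ρ_ne_zero h h0.1).1
  let δ : H →+ G :=
    { toFun := d
      map_zero' := d_eq (map_one ψ)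
      map_add' h h' := d_eq (r := ρ h * ρ h') <| by
        rw [← one_mul 1, ← single_mul_single, map_mul, hd, hd, single_mul_single] }
  refine ⟨δ, fun h c ↦ ?_⟩
  obtain ⟨r, hr⟩ := exists_map_eq_single_zero (ψ.comp singleZeroRingHom) c
  refine ⟨r * ρ h, ?_⟩
  calc ψ (single h c) = ψ (single 0 c) * ψ (single h 1) := by
        rw [← map_mul, single_mul_single, zero_add, mul_one]
    _ = single 0 r * single (d h) (ρ h) := congr_arg₂ _ hr (hd h)
    _ = single (δ h) (r * ρ h) := by rw [single_mul_single, zero_add]; rfl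

namespace IsGradedAlong

theorem surjective [Semiring k] [Semiring R] [Nontrivial R] [AddMonoid G] [AddMonoid H]
    {ψ : k[H] →+* R[G]} {δ : H →+ G} (hψδ : IsGradedAlong ψ δ) (hψ : Function.Surjective ψ) :
    Function.Surjective δ := by
  intro a
  by_contra! ha
  have coeff_eq_zero (f : k[H]) : (ψ f).coeff a = 0 := by
    induction f using induction_linear with
    | zero => simp
    | add f g hf hg => rw [map_add, coeff_add, Finsupp.add_apply, hf, hg, add_zero]
    | single h c =>
      obtain ⟨r, hr⟩ := hψδ h c
      rw [hr, coeff_single, Finsupp.single_eq_of_ne (ha h).symm]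
  obtain ⟨f, hf⟩ := hψ (single a 1)
  have := coeff_eq_zero f
  simp [hf] at this

variable [Ring k] [Ring R] [AddMonoid G] [AddGroup H] {ψ : k[H] →+* R[G]} {δ : H →+ G}

theorem map_mapDomain_ker_mem_range (hψδ : IsGradedAlong ψ δ) (f : k[δ.ker]) :
    ψ (mapDomainRingHom k δ.ker.subtype f) ∈ (singleZeroRingHom : R →+* R[G]).range := by
  induction f using induction_linear with
  | zero => simp
  | add f g hf hg => simpa only [map_add] using add_mem hf hg
  | single h c =>
    obtain ⟨r, hr⟩ := hψδ h c
    rw [δ.mem_ker.mp h.2] at hr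
    exact ⟨r, by simp [hr]⟩

theorem single_zero_coeff_zero_mem_range (hψδ : IsGradedAlong ψ δ) (f : k[H]) :
    single 0 ((ψ f).coeff 0) ∈ (ψ.comp (mapDomainRingHom k δ.ker.subtype)).range := by
  induction f using induction_linear with
  | zero => simp
  | add f g hf hg =>
    simpa only [map_add, coeff_add, Finsupp.add_apply, single_add] using add_mem hf hg
  | single h c =>
    obtain ⟨r, hr⟩ := hψδ h c
    by_cases hh : δ h = 0
    · exact ⟨single ⟨h, hh⟩ c, by simp [hr, hh]⟩
    · rw [hr, coeff_single, Finsupp.single_eq_of_ne (Ne.symm hh), single_zero]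
      exact zero_mem _

theorem range_comp_mapDomain_ker (hψδ : IsGradedAlong ψ δ) (hψ : Function.Surjective ψ) :
    (ψ.comp (mapDomainRingHom k δ.ker.subtype)).range =
      (singleZeroRingHom : R →+* R[G]).range := by
  refine le_antisymm ?_ ?_
  · rintro _ ⟨f, rfl⟩
    exact hψδ.map_mapDomain_ker_mem_range f
  · rintro _ ⟨r, rfl⟩
    obtain ⟨f, hf⟩ := hψ (single 0 r)
    simpa [hf] using hψδ.single_zero_coeff_zero_mem_range f

theorem nonempty_ringEquiv_ker (hψδ : IsGradedAlong ψ δ) (hψ : Function.Bijective ψ) :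
    Nonempty (R ≃+* k[δ.ker]) := by
  have hR : Function.Injective (singleZeroRingHom : R →+* R[G]) := single_right_injective
  have hk : Function.Injective (ψ.comp (mapDomainRingHom k δ.ker.subtype)) :=
    hψ.injective.comp (mapDomain_injective δ.ker.subtype_injective)
  exact ⟨(RingEquiv.ofLeftInverse (Function.leftInverse_invFun hR)).trans <|
    (RingEquiv.subringCongr (hψδ.range_comp_mapDomain_ker hψ.surjective).symm).trans
      (RingEquiv.ofLeftInverse (Function.leftInverse_invFun hk)).symm⟩

end IsGradedAlong

theorem exists_surjective_ringEquiv_ker [DivisionRing k] [Ring R] [AddMonoid G] [TwoUniqueSums G]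
    [AddGroup H] [UniqueSums H] (ψ : k[H] ≃+* R[G]) :
    ∃ δ : H →+ G, Function.Surjective δ ∧ Nonempty (R ≃+* k[δ.ker]) := by
  have : IsDomain R :=
    Function.Injective.isDomain ((ψ.symm : R[G] →+* k[H]).comp singleZeroRingHom)
      (ψ.symm.injective.comp single_right_injective)
  obtain ⟨δ, hδ⟩ := exists_isGradedAlong (ψ : k[H] →+* R[G])
  exact ⟨δ, hδ.surjective ψ.surjective, hδ.nonempty_ringEquiv_ker ψ.bijective⟩

end Graded

section Lattices

theorem nonempty_ker_linearEquiv_of_surjective {R M N : Type*} [CommRing R] [IsDomain R]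
    [IsPrincipalIdealRing R] [AddCommGroup M] [Module R M] [Module.Free R M] [Module.Finite R M]
    [AddCommGroup N] [Module R N] {f : M →ₗ[R] N} (hf : Function.Surjective f) {m : ℕ}
    (hm : Module.finrank R M = Module.finrank R N + m) :
    Nonempty (LinearMap.ker f ≃ₗ[R] (Fin m → R)) := by
  have hrank := (LinearMap.ker f).finrank_quotient_add_finrank
  rw [(f.quotKerEquivOfSurjective hf).finrank_eq, hm, Nat.add_left_cancel_iff] at hrank
  exact ⟨LinearEquiv.ofFinrankEq _ _ (hrank.trans (Module.finrank_fin_fun R).symm)⟩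

open scoped AddMonoidAlgebra in
theorem laurent_cancellation {k R : Type*} [DivisionRing k] [Ring R] {n m : ℕ}
    (ψ : k[Fin (n + m) → ℤ] ≃+* R[Fin n → ℤ]) : Nonempty (R ≃+* k[Fin m → ℤ]) := by
  obtain ⟨δ, hδ, ⟨ε⟩⟩ := exists_surjective_ringEquiv_ker ψ
  obtain ⟨κ⟩ := nonempty_ker_linearEquiv_of_surjective (f := δ.toIntLinearMap) hδ (m := m) (by simp)
  exact ⟨ε.trans (AddMonoidAlgebra.mapDomainRingEquiv k κ.toAddEquiv)⟩

end Lattices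

section Schemes

universe u

theorem isAffine_of_isAffine_pullback_of_section {X Y S : Scheme.{u}} (f : X ⟶ S) (g : Y ⟶ S)
    [IsSeparated g] [IsAffine (pullback f g)] {σ : S ⟶ Y} (hσ : σ ≫ g = 𝟙 S) : IsAffine X := by
  let i : X ⟶ pullback f g := pullback.lift (𝟙 X) (f ≫ σ) (by simp [hσ])
  have : IsClosedImmersion (i ≫ pullback.fst f g) := by
    rw [pullback.lift_fst]
    infer_instance
  have : IsClosedImmersion i := .of_comp i (pullback.fst f g)
  exact isAffine_of_isAffineHom i

/-- The split torus of dimension `n` over the ring `k`; `Torus n` is the case `k = ℂ`. -/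
abbrev TorusOver (k : Type u) [CommRing k] (n : ℕ) : Scheme.{u} :=
  Spec (.of (AddMonoidAlgebra k (Fin n → ℤ)))

namespace TorusOver

/-- The structure morphism of the split torus over `k`. -/
abbrev str (k : Type u) [CommRing k] (n : ℕ) : TorusOver k n ⟶ Spec (.of k) :=
  Spec.map (CommRingCat.ofHom (algebraMap k (AddMonoidAlgebra k (Fin n → ℤ))))

theorem exists_section_str (k : Type u) [CommRing k] (n : ℕ) : ∃ σ, σ ≫ str k n = 𝟙 _ := by
  let ε : AddMonoidAlgebra k (Fin n → ℤ) →ₐ[k] k := AddMonoidAlgebra.lift k k (Fin n → ℤ) 1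
  refine ⟨Spec.map (CommRingCat.ofHom ε.toRingHom), ?_⟩
  rw [← Spec.map_comp, ← CommRingCat.ofHom_comp, AlgHom.toRingHom_eq_coe, ε.comp_algebraMap]
  exact Spec.map_id _

/-- The base change of the split torus over `k` to a `k`-algebra `R` is the split torus over
`R`. -/
def pullbackIso (k R : Type u) [CommRing k] [CommRing R] [Algebra k R] (n : ℕ) :
    pullback (Spec.map (CommRingCat.ofHom (algebraMap k R))) (str k n) ≅ TorusOver R n :=
  pullbackSpecIso k R (AddMonoidAlgebra k (Fin n → ℤ)) ≪≫ Scheme.Spec.mapIso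
    (AddMonoidAlgebra.scalarTensorEquiv k R (M := Fin n → ℤ)).toRingEquiv.toCommRingCatIso.symm.op

theorem nonempty_spec_iso_of_iso {k R : Type u} [Field k] [CommRing R] {n m : ℕ}
    (e : TorusOver R n ≅ TorusOver k (n + m)) : Nonempty (Spec (.of R) ≅ TorusOver k m) := by
  let ψ : AddMonoidAlgebra k (Fin (n + m) → ℤ) ≃+* AddMonoidAlgebra R (Fin n → ℤ) :=
    (Scheme.Spec.preimageIso e).unop.commRingCatIsoToRingEquiv
  obtain ⟨ε⟩ := laurent_cancellation ψ
  exact ⟨Scheme.Spec.mapIso ε.toCommRingCatIso.symm.op⟩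

end TorusOver

theorem torus_cancellation_general {k : Type u} [Field k] {X : Scheme.{u}}
    (s : X ⟶ Spec (.of k)) (n m : ℕ)
    (h : Nonempty (pullback s (TorusOver.str k n) ≅ TorusOver k (n + m))) :
    Nonempty (X ≅ TorusOver k m) := by
  obtain ⟨e⟩ := h
  have hXaff : IsAffine X := by
    have : IsAffine (pullback s (TorusOver.str k n)) := .of_isIso e.hom
    obtain ⟨σ, hσ⟩ := TorusOver.exists_section_str k n
    exact isAffine_of_isAffine_pullback_of_section s (TorusOver.str k n) hσ
  obtain ⟨f, hf⟩ := Spec.map_surjective (X.isoSpec.inv ≫ s)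
  algebraize [f.hom]
  let e' : pullback (Spec.map f) (TorusOver.str k n) ≅ pullback s (TorusOver.str k n) :=
    asIso (pullback.map _ _ _ _ X.isoSpec.inv (𝟙 _) (𝟙 _) (by simp [hf]) (by simp))
  obtain ⟨ε⟩ := TorusOver.nonempty_spec_iso_of_iso
    ((TorusOver.pullbackIso k Γ(X, ⊤) n).symm ≪≫ e' ≪≫ e)
  exact ⟨X.isoSpec ≪≫ ε⟩

end Schemes

/-- If `X` is a complex affine variety such that `X × 𝐓ⁿ ≅ 𝐓^{n+m}` for some `n ≥ 1`,
`m ≥ 0`, then `X ≅ 𝐓^m`. -/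
theorem torus_cancellation {X : Scheme} (sX : X ⟶ SpecC)
    (hX : IsVarietyOver sX) (hXaff : IsAffine X)
    (n m : ℕ) (hn : 1 ≤ n)
    (h : Nonempty (prodC sX (Torus.str n) ≅ Torus (n + m))) :
    Nonempty (X ≅ Torus m) :=
  torus_cancellation_general sX n m h

end
end

section
/- Let C be an irreducible smooth complex curve and let p : P → C be a Zariski locally trivial 𝐓ⁿ-bundle. Then the total space P is an affine variety if and only if C is an affine curve. -/
open AlgebraicGeometry CategoryTheory CategoryTheory.Limits TopologicalSpace

noncomputable section

/-!
Only the implication from `P` to `C` needs an argument. Over an affine open trivializing subset `W`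
of the base, a function on the total space is a Laurent polynomial with coefficients in
`R = Γ(C, W)`. If `R` is a domain, the units of a Laurent polynomial ring over `R` are monomials, so
an automorphism over `R` permutes the monomials up to scalars and fixes the constant coefficient;
for reduced `R` one reduces modulo all primes. Hence the constant coefficient does not depend on the
trivialization, and the local constant coefficients glue to an additive map `ρ` from the functions
on `P` to those on `C` with `ρ 1 = 1`. A point of `C` at which `ρ g` does not vanish has a point of
its fibre at which `g` does not vanish, so `D(ρ g) ⊆ p(D(g))`.

If `P` is affine, write `1 = ∑ aᵢ gᵢ` where each `D(gᵢ)` maps into some affine open `Vᵢ ⊆ C`. Then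
`D(ρ (aᵢ gᵢ)) ⊆ Vᵢ` is affine, and `∑ ρ (aᵢ gᵢ) = 1`, so `C` is affine.
-/

section GroupAlgebra

open AddMonoidAlgebra
open scoped AlgebraMonoidAlgebra

variable {R : Type*} [CommRing R] {A A' : Type*} [AddCommGroup A] [AddCommGroup A']

lemma card_support_eq_one_of_isUnit [IsDomain R] [UniqueSums A] {x : R[A]} (hx : IsUnit x) :
    x.coeff.support.card = 1 := by
  classical
  have := UniqueSums.toTwoUniqueSums_of_addGroup (G := A)
  obtain ⟨y, hxy⟩ := hx.exists_right_inv
  have hx0 : x.coeff.support.card ≠ 0 := fun h ↦ hx.ne_zero (by simpa using h)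
  have hy0 : y.coeff.support.card ≠ 0 := fun h ↦
    (IsUnit.of_mul_eq_one_right x hxy).ne_zero (by simpa using h)
  -- Otherwise two distinct pairs of exponents of `x` and `y` have unique sums; as `x * y = 1`, both
  -- sums are `0`, which contradicts uniqueness.
  by_contra hx1
  obtain ⟨p, hp, q, hq, hne, hup, huq⟩ := TwoUniqueSums.uniqueAdd_of_one_lt_card
    (Nat.one_lt_mul_iff.mpr ⟨by omega, by omega, by omega⟩ :
      1 < x.coeff.support.card * y.coeff.support.card)
  rw [Finset.mem_product] at hp hq
  have add_eq_zero {a b : A} (ha : a ∈ x.coeff.support) (hb : b ∈ y.coeff.support)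
      (hu : UniqueAdd x.coeff.support y.coeff.support a b) : a + b = 0 := by
    by_contra hab
    have hcoeff := coeff_mul_add_of_uniqueAdd hu
    rw [hxy, AddMonoidAlgebra.one_def, coeff_single, Finsupp.single_eq_of_ne hab] at hcoeff
    exact mul_ne_zero (Finsupp.mem_support_iff.mp ha) (Finsupp.mem_support_iff.mp hb) hcoeff.symm
  have hqp := hup hq.1 hq.2 ((add_eq_zero hq.1 hq.2 huq).trans (add_eq_zero hp.1 hp.2 hup).symm)
  exact hne (Prod.ext hqp.1.symm hqp.2.symm)

lemma exists_eq_single_of_isUnit_s6 [IsDomain R] [UniqueSums A] {x : R[A]} (hx : IsUnit x) :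
    ∃ a r, x = single a r := by
  obtain ⟨a, r, -, h⟩ := Finsupp.card_support_eq_one'.mp (card_support_eq_one_of_isUnit hx)
  exact ⟨a, r, by ext : 1; simpa using h⟩

lemma coeff_zero_algHom_apply_of_injective [IsDomain R] [UniqueSums A'] {σ : R[A] →ₐ[R] R[A']}
    (hσ : Function.Injective σ) (x : R[A]) : (σ x).coeff 0 = x.coeff 0 := by
  have hσ_const (r : R) : σ (single 0 r) = single 0 r := σ.commutes r
  induction x using induction_linear with
  | zero => simp
  | add x y hx hy => simp [hx, hy]
  | single a r =>
    obtain rfl | ha := eq_or_ne a 0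
    · simp [hσ_const]
    have hunit : IsUnit (single a 1 : R[A]) :=
      .of_mul_eq_one (single (-a) 1) (by simp [AddMonoidAlgebra.one_def])
    obtain ⟨a', v, hv⟩ := exists_eq_single_of_isUnit_s6 (hunit.map σ)
    have ha' : a' ≠ 0 := by
      rintro rfl
      have h : (single a 1 : R[A]) = single 0 v := hσ (hv.trans (hσ_const v).symm)
      simpa [ha.symm] using congr(($h).coeff a)
    have hsplit : (single a r : R[A]) = r • single a 1 := by simp
    rw [hsplit, map_smul, hv]
    simp [ha, ha']

/-- An isomorphism `B ≃ D` of `R`-algebras, base changed along `R → S`, where `B'` and `D'` are any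
models of the base changes of `B` and `D`. -/
def baseChangeCongr (S : Type*) [CommRing S] [Algebra R S] {B D : Type*} (B' D' : Type*)
    [CommRing B] [CommRing D] [CommRing B'] [CommRing D'] [Algebra R B] [Algebra R D]
    [Algebra S B'] [Algebra B B'] [Algebra R B'] [IsScalarTower R S B'] [IsScalarTower R B B']
    [Algebra S D'] [Algebra D D'] [Algebra R D'] [IsScalarTower R S D'] [IsScalarTower R D D']
    [Algebra.IsPushout R S B B'] [Algebra.IsPushout R S D D'] (e : B ≃ₐ[R] D) : B' ≃ₐ[S] D' :=
  ((Algebra.IsPushout.equiv R S B B').symm.trans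
    (Algebra.TensorProduct.congr .refl e)).trans (Algebra.IsPushout.equiv R S D D')

lemma baseChangeCongr_algebraMap (S : Type*) [CommRing S] [Algebra R S] {B D : Type*}
    (B' D' : Type*) [CommRing B] [CommRing D] [CommRing B'] [CommRing D'] [Algebra R B]
    [Algebra R D] [Algebra S B'] [Algebra B B'] [Algebra R B'] [IsScalarTower R S B']
    [IsScalarTower R B B'] [Algebra S D'] [Algebra D D'] [Algebra R D'] [IsScalarTower R S D']
    [IsScalarTower R D D'] [Algebra.IsPushout R S B B'] [Algebra.IsPushout R S D D']
    (e : B ≃ₐ[R] D) (b : B) :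
    baseChangeCongr S B' D' e (algebraMap B B' b) = algebraMap D D' (e b) := by
  simp [baseChangeCongr, Algebra.IsPushout.equiv_symm_algebraMap_right,
    Algebra.IsPushout.equiv_tmul]

lemma coeff_zero_algEquiv_apply [_root_.IsReduced R] [UniqueSums A'] (σ : R[A] ≃ₐ[R] R[A'])
    (x : R[A]) : (σ x).coeff 0 = x.coeff 0 := by
  refine sub_eq_zero.mp (nilpotent_iff_mem_prime.mpr fun q hq ↦ ?_).eq_zero
  let τ := baseChangeCongr (R ⧸ q) (R ⧸ q)[A] (R ⧸ q)[A'] σ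
  have hτ : τ (algebraMap _ _ x) = algebraMap _ _ (σ x) := baseChangeCongr_algebraMap ..
  have hcoeff := coeff_zero_algHom_apply_of_injective (σ := τ.toAlgHom) τ.injective
    (algebraMap R[A] (R ⧸ q)[A] x)
  rw [AlgEquiv.coe_toAlgHom, hτ] at hcoeff
  simpa [AddMonoidAlgebra.algebraMap_def, sub_eq_zero, ← Ideal.Quotient.eq_zero_iff_mem]
    using hcoeff

lemma basicOpen_coeff_subset_image_comap [UniqueSums A] {B : Type*} [CommRing B] [Algebra R B]
    (e : B ≃ₐ[R] R[A]) (b : B) (a : A) :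
    (PrimeSpectrum.basicOpen ((e b).coeff a) : Set (PrimeSpectrum R)) ⊆
      PrimeSpectrum.comap (algebraMap R B) '' PrimeSpectrum.basicOpen b := by
  intro q hq
  let ψ : B →+* (R ⧸ q.asIdeal)[A] :=
    (mapRingHom A (Ideal.Quotient.mk q.asIdeal)).comp (e : B →+* R[A])
  have : IsDomain (R ⧸ q.asIdeal)[A] := NoZeroDivisors.to_isDomain _
  refine ⟨⟨RingHom.ker ψ, RingHom.ker_isPrime ψ⟩, fun hb ↦ hq ?_, ?_⟩
  · have hcoeff : (ψ b).coeff a = 0 := by rw [RingHom.mem_ker.mp hb]; simp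
    exact Ideal.Quotient.eq_zero_iff_mem.mp (by simpa [ψ] using hcoeff)
  · ext r
    simp [ψ, RingHom.mem_ker, Ideal.Quotient.eq_zero_iff_mem]

end GroupAlgebra

section Charts

open scoped AlgebraMonoidAlgebra

universe u

variable {C P : Scheme.{u}} {A : Type*} [AddCommGroup A] {p : P ⟶ C}

/-- Functions on `p⁻¹(W)` as an algebra over the functions on `W`. -/
abbrev preimageAlgebra (p : P ⟶ C) (W : C.Opens) : Algebra Γ(C, W) Γ(P, p ⁻¹ᵁ W) :=
  (p.app W).hom.toAlgebra

attribute [local instance] preimageAlgebra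

variable (A p) in
/-- A trivialization of `p` over an affine open subset of the base, as a bundle whose fibre is the
diagonalizable group with character group `A`. It is recorded by the isomorphism of coordinate
rings. -/
structure GroupAlgebraChart where
  opens : C.Opens
  isAffineOpen : IsAffineOpen opens
  isAffineOpen_preimage : IsAffineOpen (p ⁻¹ᵁ opens)
  equiv : Γ(P, p ⁻¹ᵁ opens) ≃ₐ[Γ(C, opens)] AddMonoidAlgebra Γ(C, opens) A

namespace GroupAlgebraChart

/-- The constant coefficient of a global function in the expansion given by a chart. -/
def constCoeff (e : GroupAlgebraChart A p) : Γ(P, ⊤) →+ Γ(C, e.opens) :=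
  .mk' (fun g ↦ (e.equiv (P.presheaf.map (homOfLE le_top).op g)).coeff 0) (by simp)

lemma constCoeff_apply (e : GroupAlgebraChart A p) (g : Γ(P, ⊤)) :
    e.constCoeff g = (e.equiv (P.presheaf.map (homOfLE le_top).op g)).coeff 0 := rfl

lemma constCoeff_one (e : GroupAlgebraChart A p) : e.constCoeff 1 = 1 := by
  simp [constCoeff_apply, AddMonoidAlgebra.one_def]

lemma exists_algEquiv_coeff_zero_eq (e : GroupAlgebraChart A p) {W : C.Opens} (hW : W ≤ e.opens)
    {f : Γ(C, e.opens)} (hf : W = C.basicOpen f) :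
    ∃ ε : Γ(P, p ⁻¹ᵁ W) ≃ₐ[Γ(C, W)] AddMonoidAlgebra Γ(C, W) A, ∀ g : Γ(P, ⊤),
      (ε (P.presheaf.map (homOfLE le_top).op g)).coeff 0 =
        C.presheaf.map (homOfLE hW).op (e.constCoeff g) := by
  let R := Γ(C, e.opens)
  let S := Γ(C, W)
  let B := Γ(P, p ⁻¹ᵁ e.opens)
  let B' := Γ(P, p ⁻¹ᵁ W)
  let : Algebra R S := (C.presheaf.map (homOfLE hW).op).hom.toAlgebra
  let : Algebra B B' := (P.presheaf.map (homOfLE (p.preimage_mono hW)).op).hom.toAlgebra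
  let : Algebra R B' := ((algebraMap S B').comp (algebraMap R S)).toAlgebra
  have : IsScalarTower R S B' := .of_algebraMap_eq' rfl
  have : IsScalarTower R B B' := .of_algebraMap_eq fun r ↦ congr($(p.naturality (homOfLE hW).op) r)
  have : IsLocalization.Away f S := e.isAffineOpen.isLocalization_of_eq_basicOpen f _ hf
  have : IsLocalization.Away (algebraMap R B f) B' :=
    e.isAffineOpen_preimage.isLocalization_of_eq_basicOpen (p.app e.opens f) _
      (by rw [hf, Scheme.preimage_basicOpen])
  have : Algebra.IsPushout R S B B' := by
    have : IsLocalization (Algebra.algebraMapSubmonoid B (.powers f)) B' := by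
      rwa [Algebra.algebraMapSubmonoid_powers]
    exact Algebra.IsPushout.symm (Algebra.isPushout_of_isLocalization (.powers f) S B B')
  refine ⟨baseChangeCongr S B' (AddMonoidAlgebra S A) e.equiv, fun g ↦ ?_⟩
  have hg : P.presheaf.map (homOfLE le_top).op g =
      algebraMap B B' (P.presheaf.map (homOfLE le_top).op g) :=
    congr($(P.presheaf.map_comp (homOfLE le_top).op (homOfLE (p.preimage_mono hW)).op) g)
  rw [hg, baseChangeCongr_algebraMap, AddMonoidAlgebra.algebraMap_def]
  simp [constCoeff_apply, RingHom.algebraMap_toAlgebra, S]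

lemma constCoeff_res_eq [IsReduced C] [UniqueSums A] (e e' : GroupAlgebraChart A p)
    (g : Γ(P, ⊤)) :
    C.presheaf.map (homOfLE inf_le_left : e.opens ⊓ e'.opens ⟶ e.opens).op (e.constCoeff g) =
      C.presheaf.map (homOfLE inf_le_right).op (e'.constCoeff g) := by
  refine C.IsSheaf.section_ext fun z hz ↦ ?_
  obtain ⟨f, f', hff', hzf⟩ :=
    exists_basicOpen_le_affine_inter e.isAffineOpen e'.isAffineOpen z hz
  have hW : C.basicOpen f ≤ e.opens := C.basicOpen_le f
  have hW' : C.basicOpen f ≤ e'.opens := hff' ▸ C.basicOpen_le f'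
  obtain ⟨ε, hε⟩ := e.exists_algEquiv_coeff_zero_eq hW rfl
  obtain ⟨ε', hε'⟩ := e'.exists_algEquiv_coeff_zero_eq hW' hff'
  have hcoeff := coeff_zero_algEquiv_apply (ε.symm.trans ε')
    (ε (P.presheaf.map (homOfLE le_top).op g))
  rw [AlgEquiv.trans_apply, AlgEquiv.symm_apply_apply, hε, hε'] at hcoeff
  refine ⟨C.basicOpen f, le_inf hW hW', hzf, ?_⟩
  simp only [← ConcreteCategory.comp_apply, ← Functor.map_comp, ← op_comp]
  exact hcoeff.symm

lemma basicOpen_constCoeff_subset [UniqueSums A] (e : GroupAlgebraChart A p) (g : Γ(P, ⊤)) :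
    (C.basicOpen (e.constCoeff g) : Set C) ⊆ p '' P.basicOpen g := by
  let g' := P.presheaf.map (homOfLE (le_top : p ⁻¹ᵁ e.opens ≤ ⊤)).op g
  have hcomp : e.isAffineOpen.fromSpec ∘ Spec.map (p.app e.opens) =
      p ∘ e.isAffineOpen_preimage.fromSpec := by
    ext y
    have h := e.isAffineOpen.SpecMap_appLE_fromSpec p e.isAffineOpen_preimage le_rfl
    rw [← Scheme.Hom.app_eq_appLE] at h
    exact congr($h y)
  let DC : (Spec Γ(C, e.opens)).Opens := PrimeSpectrum.basicOpen (e.constCoeff g)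
  let DP : (Spec Γ(P, p ⁻¹ᵁ e.opens)).Opens := PrimeSpectrum.basicOpen g'
  calc (C.basicOpen (e.constCoeff g) : Set C)
    _ = e.isAffineOpen.fromSpec '' DC :=
      congr(($(e.isAffineOpen.fromSpec_image_basicOpen (e.constCoeff g)) : Set C)).symm
    _ ⊆ e.isAffineOpen.fromSpec '' (Spec.map (p.app e.opens) '' DP) :=
      Set.image_mono (basicOpen_coeff_subset_image_comap e.equiv g' 0)
    _ = p '' (e.isAffineOpen_preimage.fromSpec '' DP) := by
      rw [← Set.image_comp, hcomp, Set.image_comp]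
    _ = p '' P.basicOpen g' :=
      congr(p '' $(e.isAffineOpen_preimage.fromSpec_image_basicOpen g'))
    _ ⊆ p '' P.basicOpen g := Set.image_mono (by simp [g', Scheme.basicOpen_res])

end GroupAlgebraChart

variable (A p) in
/-- `p` is locally on the base isomorphic to a product with the diagonalizable group with character
group `A`; for `A = ℤⁿ` this group is the torus. -/
def HasGroupAlgebraCharts : Prop :=
  ∀ x : C, ∃ e : GroupAlgebraChart A p, x ∈ e.opens

namespace HasGroupAlgebraCharts

lemma isAffineHom (hp : HasGroupAlgebraCharts A p) : IsAffineHom p := by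
  refine isAffineHom_of_forall_exists_isAffineOpen p fun x ↦ ?_
  obtain ⟨e, hxe⟩ := hp x
  exact ⟨e.opens, hxe, e.isAffineOpen, e.isAffineOpen_preimage⟩

lemma top_le_iSup_opens (hp : HasGroupAlgebraCharts A p) :
    (⊤ : C.Opens) ≤ ⨆ e : GroupAlgebraChart A p, e.opens :=
  fun x _ ↦ Opens.mem_iSup.mpr (hp x)

lemma section_ext (hp : HasGroupAlgebraCharts A p) {s t : Γ(C, ⊤)}
    (h : ∀ e : GroupAlgebraChart A p, C.presheaf.map (homOfLE (le_top : e.opens ≤ ⊤)).op s =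
      C.presheaf.map (homOfLE le_top).op t) : s = t :=
  C.sheaf.eq_of_locally_eq' _ ⊤ (fun _ ↦ homOfLE le_top) hp.top_le_iSup_opens s t h

variable [IsReduced C] [UniqueSums A]

lemma exists_res_eq_constCoeff (hp : HasGroupAlgebraCharts A p) (g : Γ(P, ⊤)) :
    ∃ s : Γ(C, ⊤), ∀ e : GroupAlgebraChart A p,
      C.presheaf.map (homOfLE le_top).op s = e.constCoeff g :=
  (C.sheaf.existsUnique_gluing' (fun e : GroupAlgebraChart A p ↦ e.opens) ⊤
    (fun _ ↦ homOfLE le_top) hp.top_le_iSup_opens (fun e ↦ e.constCoeff g)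
    fun e e' ↦ e.constCoeff_res_eq e' g).exists

/-- The Reynolds operator, which takes constant coefficients in all charts; on global functions it
is the projection onto the invariants of the structure group. -/
def reynolds (hp : HasGroupAlgebraCharts A p) : Γ(P, ⊤) →+ Γ(C, ⊤) :=
  .mk' (fun g ↦ (hp.exists_res_eq_constCoeff g).choose) fun a b ↦ hp.section_ext fun e ↦
    ((hp.exists_res_eq_constCoeff (a + b)).choose_spec e).trans <| by
      simp only [map_add, (hp.exists_res_eq_constCoeff _).choose_spec e]

lemma res_reynolds (hp : HasGroupAlgebraCharts A p) (e : GroupAlgebraChart A p) (g : Γ(P, ⊤)) :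
    C.presheaf.map (homOfLE le_top).op (hp.reynolds g) = e.constCoeff g :=
  (hp.exists_res_eq_constCoeff g).choose_spec e

lemma reynolds_one (hp : HasGroupAlgebraCharts A p) : hp.reynolds 1 = 1 :=
  hp.section_ext fun e ↦ by rw [res_reynolds, e.constCoeff_one, map_one]

lemma basicOpen_reynolds_subset (hp : HasGroupAlgebraCharts A p) (g : Γ(P, ⊤)) :
    (C.basicOpen (hp.reynolds g) : Set C) ⊆ p '' P.basicOpen g := by
  intro x hx
  obtain ⟨e, hxe⟩ := hp x
  refine e.basicOpen_constCoeff_subset g ?_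
  rw [← hp.res_reynolds e, Scheme.basicOpen_res]
  exact ⟨hxe, hx⟩

end HasGroupAlgebraCharts

lemma isAffineOpen_basicOpen_of_le {V : C.Opens} (hV : IsAffineOpen V) {f : Γ(C, ⊤)}
    (hf : C.basicOpen f ≤ V) : IsAffineOpen (C.basicOpen f) := by
  have h := hV.basicOpen (C.presheaf.map (homOfLE le_top).op f)
  rwa [Scheme.basicOpen_res, inf_eq_right.mpr hf] at h

lemma span_basicOpen_le_preimage_eq_top [IsAffine P] (p : P ⟶ C) :
    Ideal.span {g : Γ(P, ⊤) | ∃ V : C.Opens, IsAffineOpen V ∧ P.basicOpen g ≤ p ⁻¹ᵁ V} = ⊤ := by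
  rw [← (isAffineOpen_top P).self_le_iSup_basicOpen_iff]
  intro y _
  obtain ⟨_, ⟨V, hV, rfl⟩, hyV, -⟩ :=
    C.isBasis_affineOpens.exists_subset_of_mem_open (Set.mem_univ (p y)) isOpen_univ
  obtain ⟨g, hgV, hyg⟩ := (isAffineOpen_top P).exists_basicOpen_le (V := p ⁻¹ᵁ V) ⟨y, hyV⟩ trivial
  exact Opens.mem_iSup.mpr ⟨⟨g, V, hV, hgV⟩, hyg⟩

lemma isAffine_of_basicOpen_subset_image [IsAffine P] (p : P ⟶ C) (ρ : Γ(P, ⊤) →+ Γ(C, ⊤))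
    (hρ_one : ρ 1 = 1) (hρ : ∀ g, (C.basicOpen (ρ g) : Set C) ⊆ p '' P.basicOpen g) :
    IsAffine C := by
  let S : Set Γ(C, ⊤) := {f | IsAffineOpen (C.basicOpen f)}
  refine isAffine_of_isAffineOpen_basicOpen S ?_ fun _ hf ↦ hf
  suffices hρS : ∀ g, ρ g ∈ Ideal.span S from
    (Ideal.eq_top_iff_one _).mpr (hρ_one ▸ hρS 1)
  intro g
  have hg := span_basicOpen_le_preimage_eq_top p ▸ Submodule.mem_top (x := g)
  induction hg using Submodule.closure_induction with
  | zero => simp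
  | add g g' _ _ hg hg' => exact map_add ρ g g' ▸ add_mem hg hg'
  | smul_mem a g hg =>
    obtain ⟨V, hV, hgV⟩ := hg
    refine Ideal.subset_span (isAffineOpen_basicOpen_of_le hV ?_)
    refine (hρ _).trans (Set.image_subset_iff.mpr fun y hy ↦ hgV ?_)
    rw [smul_eq_mul, SetLike.mem_coe, Scheme.basicOpen_mul] at hy
    exact hy.2

lemma HasGroupAlgebraCharts.isAffine_iff [IsReduced C] [UniqueSums A]
    (hp : HasGroupAlgebraCharts A p) : IsAffine P ↔ IsAffine C := by
  have := hp.isAffineHom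
  exact ⟨fun _ ↦ isAffine_of_basicOpen_subset_image p hp.reynolds hp.reynolds_one
    hp.basicOpen_reynolds_subset, fun _ ↦ isAffine_of_isAffineHom p⟩

lemma morphismRestrict_appTop_topIso (p : P ⟶ C) (W : C.Opens) :
    (p ∣_ W).appTop ≫ (p ⁻¹ᵁ W).topIso.hom = W.topIso.hom ≫ p.app W := by
  rw [morphismRestrict_appTop]
  refine (Category.assoc _ _ _).trans (.trans ?_ (p.naturality _).symm)
  exact congr(p.app _ ≫ $((P.presheaf.map_comp _ _).symm))

lemma exists_groupAlgebraChart_of_isPullback {K : Type u} [CommRing K] {A : Type u}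
    [AddCommGroup A] {W : C.Opens} (hW : IsAffineOpen W)
    {t : (p ⁻¹ᵁ W).toScheme ⟶ Spec (.of (AddMonoidAlgebra K A))}
    {s : W.toScheme ⟶ Spec (.of K)}
    (h : IsPullback t (p ∣_ W) (Spec.map (CommRingCat.ofHom (algebraMap K _))) s) :
    ∃ e : GroupAlgebraChart A p, e.opens = W := by
  have : IsAffine W := hW
  have hP : IsAffineOpen (p ⁻¹ᵁ W) := .of_isPullback h
  let R := Γ(C, W)
  let B := Γ(P, p ⁻¹ᵁ W)
  let ψ : CommRingCat.of K ⟶ R := (Scheme.ΓSpecIso _).inv ≫ s.appTop ≫ W.topIso.hom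
  let τ : CommRingCat.of (AddMonoidAlgebra K A) ⟶ B :=
    (Scheme.ΓSpecIso _).inv ≫ t.appTop ≫ (p ⁻¹ᵁ W).topIso.hom
  have hpush : IsPushout ψ (CommRingCat.ofHom (algebraMap K (AddMonoidAlgebra K A)))
      (p.app W) τ :=
    ((isPushout_appTop_of_isPullback h).of_iso (Scheme.ΓSpecIso _) (Scheme.ΓSpecIso _)
      W.topIso (p ⁻¹ᵁ W).topIso (by simp) (by simp [ψ]) (by simp [τ])
      (morphismRestrict_appTop_topIso p W)).flip
  let : Algebra K R := ψ.hom.toAlgebra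
  let : Algebra (AddMonoidAlgebra K A) B := τ.hom.toAlgebra
  let : Algebra K B := ((algebraMap R B).comp (algebraMap K R)).toAlgebra
  have : IsScalarTower K R B := .of_algebraMap_eq' rfl
  have : IsScalarTower K (AddMonoidAlgebra K A) B :=
    .of_algebraMap_eq fun r ↦ congr($hpush.w r)
  have : Algebra.IsPushout K R (AddMonoidAlgebra K A) B :=
    CommRingCat.isPushout_iff_isPushout.mp hpush
  exact ⟨⟨W, hW, hP, baseChangeCongr R B (AddMonoidAlgebra R A)
    (AlgEquiv.refl : AddMonoidAlgebra K A ≃ₐ[K] _)⟩, rfl⟩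

end Charts

section TorusBundle

variable {n : ℕ} {C P : Scheme} {sC : C ⟶ SpecC} {p : P ⟶ C}

lemma IsTrivialTorusBundle.exists_isPullback {U W : C.Opens}
    (hU : IsTrivialTorusBundle n (U.ι ≫ sC) (pullback.snd p U.ι)) (hWU : W ≤ U) :
    ∃ t : (p ⁻¹ᵁ W).toScheme ⟶ Torus n, IsPullback t (p ∣_ W) (Torus.str n) (W.ι ≫ sC) := by
  obtain ⟨e, he⟩ := hU
  have htriv : IsPullback (e.hom ≫ pullback.snd (U.ι ≫ sC) (Torus.str n)) (pullback.snd p U.ι)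
      (Torus.str n) (U.ι ≫ sC) :=
    (IsPullback.of_hasPullback (U.ι ≫ sC) (Torus.str n)).flip.of_iso e.symm (Iso.refl _)
      (Iso.refl _) (Iso.refl _) (by simp) (by simp [← he]) (by simp) (by simp)
  let l : (p ⁻¹ᵁ W).toScheme ⟶ pullback p U.ι :=
    pullback.lift (p ⁻¹ᵁ W).ι (p ∣_ W ≫ C.homOfLE hWU) (by simp)
  have hl_fst : l ≫ pullback.fst p U.ι = (p ⁻¹ᵁ W).ι := pullback.lift_fst _ _ _
  have hl_snd : l ≫ pullback.snd p U.ι = p ∣_ W ≫ C.homOfLE hWU := pullback.lift_snd _ _ _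
  have hres : IsPullback l (p ∣_ W) (pullback.snd p U.ι) (C.homOfLE hWU) := by
    refine IsPullback.of_right ?_ hl_snd (IsPullback.of_hasPullback p U.ι)
    rw [hl_fst, Scheme.homOfLE_ι]
    exact (isPullback_morphismRestrict p W).flip
  exact ⟨_, by simpa using hres.paste_horiz htriv⟩

lemma IsLocTrivTorusBundle.hasGroupAlgebraCharts (hp : IsLocTrivTorusBundle n sC p) :
    HasGroupAlgebraCharts (Fin n → ℤ) p := by
  intro x
  obtain ⟨U, hxU, hU⟩ := hp x
  obtain ⟨_, ⟨W, hW, rfl⟩, hxW, hWU⟩ :=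
    C.isBasis_affineOpens.exists_subset_of_mem_open hxU U.isOpen
  obtain ⟨t, ht⟩ := hU.exists_isPullback hWU
  obtain ⟨e, rfl⟩ := exists_groupAlgebraChart_of_isPullback hW ht
  exact ⟨e, hxW⟩

end TorusBundle

theorem torus_bundle_affine_iff_base_affine_general (n : ℕ) {C P : Scheme} [IsReduced C]
    (sC : C ⟶ SpecC) (p : P ⟶ C) (hp : IsLocTrivTorusBundle n sC p) :
    IsAffine P ↔ IsAffine C :=
  hp.hasGroupAlgebraCharts.isAffine_iff

/-- The total space of a Zariski locally trivial `𝐓ⁿ`-bundle over an irreducible smooth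
complex curve `C` is affine if and only if `C` is affine. -/
theorem torus_bundle_affine_iff_base_affine (n : ℕ)
    {C P : Scheme} (sC : C ⟶ SpecC)
    (hC : IsVarietyOver sC) (hCsm : IsSmooth sC) (hCirr : IrreducibleSpace C)
    (hdim : topologicalKrullDim C = ((1 : ℕ∞) : WithBot ℕ∞))
    (p : P ⟶ C) (hp : IsLocTrivTorusBundle n sC p) :
    IsAffine P ↔ IsAffine C :=
  have := hC.1
  torus_bundle_affine_iff_base_affine_general n sC p hp

end
end
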